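/- There exists a universal constant C > 0 such that the following holds for all positive integers n and d ≥ 2, all reals σ, f > 0, and all δ ∈ (0,1). Given symmetric matrices A_1, ..., A_n ∈ ℝ^{d×d} with ‖∑_{i=1}^n A_i²‖_op ≤ σ² and ∑_{i=1}^n ‖A_i‖_F² ≤ n f², there exists a linear subspace H ⊆ ℝ^n of dimension at least (1−δ) n such that, if y is a standard Gaussian random vector on H (i.e., y = ∑_j h_j v^j for an orthonormal basis v^1, ..., v^m of H and i.i.d. standard Gaussians h_j), then 𝔼[‖∑_{i=1}^n y_i A_i‖_op] ≤ C · (σ + (log d)^{3/4} · σ^{1/2} · (f / δ^{1/2})^{1/2}). -/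

import Mathlib

open MeasureTheory ProbabilityTheory

/-- Operator norm (largest singular value) of a real matrix, as the norm of the
induced linear map between Euclidean spaces. -/
noncomputable def opNorm {m n : Type*} [Fintype m] [Fintype n] [DecidableEq n]
    (M : Matrix m n ℝ) : ℝ :=
  ‖LinearMap.toContinuousLinearMap (Matrix.toEuclideanLin M)‖

/-- Squared Frobenius norm of a real matrix. -/
noncomputable def frobNormSq {m n : Type*} [Fintype m] [Fintype n]
    (M : Matrix m n ℝ) : ℝ := ∑ i, ∑ j, (M i j) ^ 2

/-! Take `H` orthogonal to the eigenvectors of the Gram matrix `⟨A i, A j⟩` with eigenvalue above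
`f² / δ`. Since the trace is at most `n f²`, there are at most `δ n` of them. On `H` the Gaussian
matrix `Y` has `‖𝔼 Y²‖ ≤ σ²` by Bessel's inequality and `‖Cov Y‖ ≤ f² / δ` by construction, and it
remains to bound `𝔼 ‖Y‖` by `σ + (log d)^{3/4} √(σ v)` where `v² = ‖Cov Y‖`.

This is done by the moment method with a moment of order `2P`, `P ≈ log d`. Integrating by parts,
`𝔼 Y²ᵏ⁺² = ∑ 𝔼 (A i Yᵐ A i Y²ᵏ⁻ᵐ)`; interpolating towards an independent copy of `Y`, both powers
can be replaced by their expectations at the cost of the words `∑ tr (A i Yᵃ A j Yᵇ A i Yᶜ A j Yᵉ)`.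
As `i` and `j` cross, Cauchy–Schwarz bounds these by `σ² v²` times a moment of order `2k - 2`. So
the moments satisfy the recursion of a semicircular element, whose solution has Catalan growth, up
to errors of relative size `P³ σ² v² / u²`, where `u` is the normalized `P`-th root of the trace
moment of order `2P`. Hence `u` cannot exceed a large multiple of `σ² + P^{3/2} σ v`.
-/

section GaussianMoments

lemma integrable_pow_gaussianReal (k : ℕ) : Integrable (fun x : ℝ ↦ x ^ k) (gaussianReal 0 1) := by
  have h := (memLp_id_gaussianReal (μ := 0) (v := 1) (k : NNReal)).integrable_norm_pow'
  refine (integrable_norm_iff (by fun_prop)).1 ?_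
  simpa [norm_pow] using h

lemma integrable_pow_mul_gaussianPDFReal (k : ℕ) :
    Integrable (fun x : ℝ ↦ x ^ k * gaussianPDFReal 0 1 x) := by
  have h := integrable_pow_gaussianReal k
  rw [gaussianReal_of_var_ne_zero _ one_ne_zero,
    integrable_withDensity_iff (measurable_gaussianPDF _ _)
      (ae_of_all _ fun _ ↦ gaussianPDF_lt_top)] at h
  simpa only [toReal_gaussianPDF] using h

lemma hasDerivAt_neg_gaussianPDFReal (x : ℝ) :
    HasDerivAt (fun x ↦ -gaussianPDFReal 0 1 x) (x * gaussianPDFReal 0 1 x) x := by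
  unfold gaussianPDFReal
  have hexponent : HasDerivAt (fun x : ℝ ↦ -(x - 0) ^ 2 / (2 * ((1 : NNReal) : ℝ))) (-x) x := by
    refine ((((hasDerivAt_id x).sub_const 0).pow 2).neg.div_const _).congr_deriv ?_
    simp only [Nat.cast_ofNat, id_eq, sub_zero, Nat.add_one_sub_one, pow_one, mul_one,
      NNReal.coe_one]
    ring
  refine ((hexponent.exp.const_mul _).neg).congr_deriv ?_
  ring

lemma integral_pow_succ_gaussianReal (k : ℕ) :
    ∫ x, x ^ (k + 1) ∂gaussianReal 0 1 = k * ∫ x, x ^ (k - 1) ∂gaussianReal 0 1 := by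
  simp only [integral_gaussianReal_eq_integral_smul one_ne_zero, smul_eq_mul,
    mul_comm (gaussianPDFReal 0 1 _)]
  have hparts := integral_mul_deriv_eq_deriv_mul_of_integrable
    (fun x _ ↦ hasDerivAt_pow k x) (fun x _ ↦ hasDerivAt_neg_gaussianPDFReal x)
    ((integrable_pow_mul_gaussianPDFReal (k + 1)).congr
      (ae_of_all _ fun x ↦ by simp only [Pi.mul_apply]; ring))
    (((integrable_pow_mul_gaussianPDFReal (k - 1)).const_mul (-(k : ℝ))).congr
      (ae_of_all _ fun x ↦ by simp only [Pi.mul_apply]; ring))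
    ((integrable_pow_mul_gaussianPDFReal k).neg.congr
      (ae_of_all _ fun x ↦ by simp only [Pi.mul_apply, Pi.neg_apply]; ring))
  calc ∫ x : ℝ, x ^ (k + 1) * gaussianPDFReal 0 1 x
      = ∫ x : ℝ, x ^ k * (x * gaussianPDFReal 0 1 x) := by simp only [pow_succ, mul_assoc]
    _ = -∫ x : ℝ, k * x ^ (k - 1) * -gaussianPDFReal 0 1 x := hparts
    _ = k * ∫ x : ℝ, x ^ (k - 1) * gaussianPDFReal 0 1 x := by
      simp only [mul_neg, integral_neg, neg_neg, mul_assoc, integral_const_mul]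

end GaussianMoments

section GaussianExpectation

open MvPolynomial

variable {κ ι ι' : Type*} [Fintype κ] [Fintype ι] [Fintype ι']

lemma integrable_eval_gaussian (p : MvPolynomial κ ℝ) :
    Integrable (fun g ↦ eval g p) (Measure.pi fun _ : κ ↦ gaussianReal 0 1) := by
  induction p using MvPolynomial.induction_on' with
  | monomial s a =>
    simp only [eval_monomial, Finsupp.prod_fintype _ _ fun _ ↦ pow_zero _]
    exact (Integrable.fintype_prod (f := fun i (x : ℝ) ↦ x ^ s i)
      fun i ↦ integrable_pow_gaussianReal _).const_mul _
  | add p q hp hq =>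
    simp only [map_add]
    exact hp.add hq

/-- The expectation of a real polynomial evaluated at independent standard Gaussian variables. -/
noncomputable def gaussExp : MvPolynomial κ ℝ →ₗ[ℝ] ℝ where
  toFun p := ∫ g, eval g p ∂Measure.pi fun _ : κ ↦ gaussianReal 0 1
  map_add' p q := by
    simp only [map_add]
    exact integral_add (integrable_eval_gaussian p) (integrable_eval_gaussian q)
  map_smul' a p := by
    simp only [smul_eval, RingHom.id_apply, smul_eq_mul, integral_const_mul]

lemma gaussExp_apply (p : MvPolynomial κ ℝ) :
    gaussExp p = ∫ g, eval g p ∂Measure.pi fun _ : κ ↦ gaussianReal 0 1 := rfl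

lemma gaussExp_mono {p q : MvPolynomial κ ℝ} (h : ∀ g, eval g p ≤ eval g q) :
    gaussExp p ≤ gaussExp q :=
  integral_mono (integrable_eval_gaussian p) (integrable_eval_gaussian q) h

lemma gaussExp_nonneg {p : MvPolynomial κ ℝ} (h : ∀ g, 0 ≤ eval g p) : 0 ≤ gaussExp p :=
  integral_nonneg h

lemma abs_gaussExp_le {p q : MvPolynomial κ ℝ} (h : ∀ g, |eval g p| ≤ eval g q) :
    |gaussExp p| ≤ gaussExp q := by
  rw [← Real.norm_eq_abs, gaussExp_apply, gaussExp_apply]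
  exact norm_integral_le_of_norm_le (integrable_eval_gaussian q) (ae_of_all _ h)

lemma gaussExp_C (a : ℝ) : gaussExp (C a : MvPolynomial κ ℝ) = a := by simp [gaussExp_apply]

lemma gaussExp_C_mul (a : ℝ) (p : MvPolynomial κ ℝ) : gaussExp (C a * p) = a * gaussExp p := by
  rw [← smul_eq_C_mul, map_smul, smul_eq_mul]

lemma gaussExp_monomial (s : κ →₀ ℕ) (a : ℝ) :
    gaussExp (monomial s a) = a * ∏ i, ∫ x, x ^ s i ∂gaussianReal 0 1 := by
  simp only [gaussExp_apply, eval_monomial, Finsupp.prod_fintype _ _ fun _ ↦ pow_zero _]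
  rw [integral_const_mul, integral_fintype_prod_eq_prod fun i (x : ℝ) ↦ x ^ s i]

theorem gaussExp_X_mul (j : κ) (p : MvPolynomial κ ℝ) :
    gaussExp (X j * p) = gaussExp (pderiv j p) := by
  classical
  induction p using MvPolynomial.induction_on' with
  | monomial s a =>
    have prod_congr_off_j (f : κ →₀ ℕ) (hf : ∀ i ≠ j, f i = s i) :
        ∏ i ∈ Finset.univ.erase j, ∫ x, x ^ f i ∂gaussianReal 0 1
          = ∏ i ∈ Finset.univ.erase j, ∫ x, x ^ s i ∂gaussianReal 0 1 :=
      Finset.prod_congr rfl fun i hi ↦ by rw [hf i (Finset.ne_of_mem_erase hi)]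
    have hX : X j * monomial s a = monomial (s + Finsupp.single j 1) a := by
      rw [monomial_add_single, pow_one, mul_comm]
    rw [hX, pderiv_monomial, gaussExp_monomial, gaussExp_monomial,
      ← Finset.mul_prod_erase _ _ (Finset.mem_univ j),
      ← Finset.mul_prod_erase _ _ (Finset.mem_univ j),
      prod_congr_off_j _ (fun i hi ↦ by simp [hi.symm]),
      prod_congr_off_j (s - Finsupp.single j 1) (fun i hi ↦ by simp [hi.symm])]
    simp only [Finsupp.add_apply, Finsupp.single_eq_same, Finsupp.tsub_apply,
      integral_pow_succ_gaussianReal]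
    ring
  | add p q hp hq => simp only [map_add, mul_add, hp, hq]

lemma gaussExp_rename_mul_rename (p : MvPolynomial ι ℝ) (q : MvPolynomial ι' ℝ) :
    gaussExp (rename Sum.inl p * rename Sum.inr q) = gaussExp p * gaussExp q := by
  have hsplit := measurePreserving_sumPiEquivProdPi fun _ : ι ⊕ ι' ↦ gaussianReal 0 1
  simp only [gaussExp_apply, map_mul, eval_rename]
  rw [← integral_prod_mul, ← hsplit.integral_comp (MeasurableEquiv.measurableEmbedding _)]
  rfl

lemma gaussExp_rename_inl (p : MvPolynomial ι ℝ) :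
    gaussExp (rename (Sum.inl : ι → ι ⊕ ι') p) = gaussExp p := by
  have h := gaussExp_rename_mul_rename p (C 1 : MvPolynomial ι' ℝ)
  rwa [rename_C, gaussExp_C, mul_one, C_1, mul_one] at h

end GaussianExpectation

section Interpolation

open MvPolynomial

variable {ι : Type*}

/-- The polynomial `q` evaluated at the rotated vector `cos θ • g + sin θ • g'`, as a polynomial in
the coordinates of two vectors `g` (`Sum.inl`) and `g'` (`Sum.inr`). If these are independent
standard Gaussian, the rotation interpolates between `g` and the independent copy `g'`. -/
noncomputable def rotate (θ : ℝ) : MvPolynomial ι ℝ →ₐ[ℝ] MvPolynomial (ι ⊕ ι) ℝ :=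
  aeval fun i ↦ C (Real.cos θ) * X (Sum.inl i) + C (Real.sin θ) * X (Sum.inr i)

lemma eval_rotate (θ : ℝ) (g : ι ⊕ ι → ℝ) (q : MvPolynomial ι ℝ) :
    eval g (rotate θ q)
      = eval (fun i ↦ Real.cos θ * g (Sum.inl i) + Real.sin θ * g (Sum.inr i)) q := by
  induction q using MvPolynomial.induction_on <;> simp_all [rotate]

lemma rotate_zero (q : MvPolynomial ι ℝ) : rotate 0 q = rename Sum.inl q := by
  simp only [rotate, Real.cos_zero, Real.sin_zero, C_1, C_0, one_mul, zero_mul, add_zero]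
  exact (aeval_rename Sum.inl X q).symm.trans (aeval_X_left_apply _)

lemma rotate_pi_div_two (q : MvPolynomial ι ℝ) : rotate (Real.pi / 2) q = rename Sum.inr q := by
  simp only [rotate, Real.cos_pi_div_two, Real.sin_pi_div_two, C_1, C_0, one_mul, zero_mul,
    zero_add]
  exact (aeval_rename Sum.inr X q).symm.trans (aeval_X_left_apply _)

lemma pderiv_inl_rotate (θ : ℝ) (j : ι) (q : MvPolynomial ι ℝ) :
    pderiv (Sum.inl j) (rotate θ q) = C (Real.cos θ) * rotate θ (pderiv j q) := by
  classical
  induction q using MvPolynomial.induction_on with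
  | C a => simp [rotate]
  | add p q hp hq => simp only [map_add, hp, hq, mul_add]
  | mul_X p i hp =>
    have hX : pderiv (Sum.inl j) (rotate θ (X i))
        = C (Real.cos θ) * rotate θ (pderiv j (X i)) := by
      rcases eq_or_ne i j with rfl | hij <;> simp [rotate, *]
    simp only [map_mul, pderiv_mul, map_add, hp, hX]
    ring

lemma pderiv_inr_rotate (θ : ℝ) (j : ι) (q : MvPolynomial ι ℝ) :
    pderiv (Sum.inr j) (rotate θ q) = C (Real.sin θ) * rotate θ (pderiv j q) := by
  classical
  induction q using MvPolynomial.induction_on with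
  | C a => simp [rotate]
  | add p q hp hq => simp only [map_add, hp, hq, mul_add]
  | mul_X p i hp =>
    have hX : pderiv (Sum.inr j) (rotate θ (X i))
        = C (Real.sin θ) * rotate θ (pderiv j (X i)) := by
      rcases eq_or_ne i j with rfl | hij <;> simp [rotate, *]
    simp only [map_mul, pderiv_mul, map_add, hp, hX]
    ring

lemma pderiv_inr_rename_inl (j : ι) (p : MvPolynomial ι ℝ) :
    pderiv (Sum.inr j) (rename Sum.inl p : MvPolynomial (ι ⊕ ι) ℝ) = 0 := by
  classical
  refine pderiv_eq_zero_of_notMem_vars fun h ↦ ?_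
  simpa using vars_rename Sum.inl p h

/-- The derivative of `cos θ • g + sin θ • g'` in `θ`, coordinate `j`. -/
noncomputable def rotateVelocity (θ : ℝ) (j : ι) : MvPolynomial (ι ⊕ ι) ℝ :=
  C (-Real.sin θ) * X (Sum.inl j) + C (Real.cos θ) * X (Sum.inr j)

variable [Fintype ι]

-- The factor `r` makes the induction on `q` go through: it absorbs the variables split off `q`.
lemma hasDerivAt_gaussExp_mul_rotate (r : MvPolynomial (ι ⊕ ι) ℝ) (q : MvPolynomial ι ℝ) (θ : ℝ) :
    HasDerivAt (fun θ ↦ gaussExp (r * rotate θ q))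
      (gaussExp (r * ∑ j, rotateVelocity θ j * rotate θ (pderiv j q))) θ := by
  classical
  induction q using MvPolynomial.induction_on generalizing r with
  | C a => simpa [rotate] using hasDerivAt_const θ (gaussExp (r * C a))
  | add p q hp hq =>
    simp only [map_add, mul_add, Finset.sum_add_distrib]
    exact (hp r).add (hq r)
  | mul_X p i hp =>
    have hderiv := ((Real.hasDerivAt_cos θ).mul (hp (r * X (Sum.inl i)))).add
      ((Real.hasDerivAt_sin θ).mul (hp (r * X (Sum.inr i))))
    have hsplit (t : ℝ) (s : MvPolynomial (ι ⊕ ι) ℝ) : gaussExp (r * (s * rotate t (X i)))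
        = Real.cos t * gaussExp (r * X (Sum.inl i) * s)
          + Real.sin t * gaussExp (r * X (Sum.inr i) * s) := by
      rw [← gaussExp_C_mul, ← gaussExp_C_mul, ← map_add]
      simp only [rotate, aeval_X]
      ring_nf
    have hsum : ∑ j, rotateVelocity θ j * rotate θ (pderiv j (p * X i))
        = (∑ j, rotateVelocity θ j * rotate θ (pderiv j p)) * rotate θ (X i)
          + rotateVelocity θ i * rotate θ p := by
      simp only [pderiv_mul, pderiv_X, map_add, map_mul, mul_add, Finset.sum_add_distrib,
        Finset.sum_mul, mul_assoc]
      congr 1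
      rw [Finset.sum_eq_single i (fun j _ hj ↦ by simp [hj.symm]) (by simp)]
      simp
    simp only [map_mul, hsplit]
    refine hderiv.congr_deriv ?_
    rw [hsum, mul_add, map_add, hsplit]
    have hvel : gaussExp (r * (rotateVelocity θ i * rotate θ p))
        = -Real.sin θ * gaussExp (r * X (Sum.inl i) * rotate θ p)
          + Real.cos θ * gaussExp (r * X (Sum.inr i) * rotate θ p) := by
      rw [← gaussExp_C_mul, ← gaussExp_C_mul, ← map_add, rotateVelocity]
      ring_nf
    rw [hvel]
    ring

/-- Gaussian interpolation: integrating by parts turns the derivative of `𝔼 p(g) q(g_θ)` along the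
rotation `g_θ = cos θ • g + sin θ • g'` into a mixed second derivative. -/
theorem hasDerivAt_gaussExp_rename_mul_rotate (p q : MvPolynomial ι ℝ) (θ : ℝ) :
    HasDerivAt (fun θ ↦ gaussExp (rename Sum.inl p * rotate θ q))
      (-Real.sin θ * ∑ j, gaussExp (rename Sum.inl (pderiv j p) * rotate θ (pderiv j q))) θ := by
  refine (hasDerivAt_gaussExp_mul_rotate _ q θ).congr_deriv ?_
  rw [Finset.mul_sum, Finset.mul_sum, map_sum]
  refine Finset.sum_congr rfl fun j _ ↦ ?_
  set P : MvPolynomial (ι ⊕ ι) ℝ := rename Sum.inl p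
  calc gaussExp (P * (rotateVelocity θ j * rotate θ (pderiv j q)))
      = -Real.sin θ * gaussExp (X (Sum.inl j) * (P * rotate θ (pderiv j q)))
        + Real.cos θ * gaussExp (X (Sum.inr j) * (P * rotate θ (pderiv j q))) := by
        rw [← gaussExp_C_mul, ← gaussExp_C_mul, ← map_add, rotateVelocity]
        ring_nf
    _ = -Real.sin θ * gaussExp (rename Sum.inl (pderiv j p) * rotate θ (pderiv j q)) := by
        rw [gaussExp_X_mul, gaussExp_X_mul, pderiv_mul, pderiv_mul, pderiv_inl_rotate,
          pderiv_inr_rotate, pderiv_rename Sum.inl_injective, pderiv_inr_rename_inl, zero_mul,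
          zero_add, map_add, mul_left_comm P, mul_left_comm P, gaussExp_C_mul, gaussExp_C_mul]
        ring

lemma gaussExp_rotate (θ : ℝ) (q : MvPolynomial ι ℝ) : gaussExp (rotate θ q) = gaussExp q := by
  have hderiv (t : ℝ) : HasDerivAt (fun θ ↦ gaussExp (rotate θ q)) 0 t := by
    simpa using hasDerivAt_gaussExp_rename_mul_rotate 1 q t
  rw [is_const_of_deriv_eq_zero (fun t ↦ (hderiv t).differentiableAt)
    (fun t ↦ (hderiv t).deriv) θ 0, rotate_zero, gaussExp_rename_inl]

lemma gaussExp_eq_zero_of_odd {p : MvPolynomial ι ℝ} (h : ∀ g, eval (-g) p = -eval g p) :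
    gaussExp p = 0 := by
  have hneg : gaussExp (rotate Real.pi p) = -gaussExp (rotate 0 p) := by
    simp only [gaussExp_apply, eval_rotate, ← integral_neg, ← h]
    simp [Pi.neg_def]
  rw [gaussExp_rotate, gaussExp_rotate] at hneg
  linarith

/-- Integrate the interpolation from `g` at `θ = 0` to its independent copy at `θ = π / 2`. -/
theorem abs_gaussExp_mul_sub_le {α β : Type*} [Fintype α] [Fintype β] (T : α → β → ℝ)
    (P : α → MvPolynomial ι ℝ) (Q : β → MvPolynomial ι ℝ) (G : MvPolynomial ι ℝ)
    (hG : ∀ g h, |∑ j, ∑ a, ∑ b, T a b * (eval g (pderiv j (P a)) * eval h (pderiv j (Q b)))|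
      ≤ eval g G + eval h G) :
    |∑ a, ∑ b, T a b * gaussExp (P a * Q b) - ∑ a, ∑ b, T a b * (gaussExp (P a) * gaussExp (Q b))|
      ≤ 4 * gaussExp G := by
  let D (θ : ℝ) : MvPolynomial (ι ⊕ ι) ℝ :=
    ∑ j, ∑ a, ∑ b, C (T a b) * (rename Sum.inl (pderiv j (P a)) * rotate θ (pderiv j (Q b)))
  let Φ (θ : ℝ) : ℝ := ∑ a, ∑ b, T a b * gaussExp (rename Sum.inl (P a) * rotate θ (Q b))
  have hderiv (θ : ℝ) : HasDerivAt Φ (-Real.sin θ * gaussExp (D θ)) θ := by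
    refine (HasDerivAt.fun_sum fun a _ ↦ HasDerivAt.fun_sum fun b _ ↦
      (hasDerivAt_gaussExp_rename_mul_rotate (P a) (Q b) θ).const_mul (T a b)).congr_deriv ?_
    simp only [D, map_sum, gaussExp_C_mul, Finset.mul_sum, mul_left_comm (T _ _)]
    exact (Finset.sum_congr rfl fun a _ ↦ Finset.sum_comm).trans Finset.sum_comm
  have hD (θ : ℝ) : |gaussExp (D θ)| ≤ 2 * gaussExp G := by
    calc |gaussExp (D θ)| ≤ gaussExp (rename Sum.inl G + rotate θ G) :=
          abs_gaussExp_le fun g ↦ by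
            simpa [D, eval_rename, eval_rotate] using hG (g ∘ Sum.inl) _
      _ = 2 * gaussExp G := by rw [map_add, gaussExp_rename_inl, gaussExp_rotate, two_mul]
  have hmean := (convex_Icc 0 (Real.pi / 2)).norm_image_sub_le_of_norm_hasDerivWithin_le
    (fun θ _ ↦ (hderiv θ).hasDerivWithinAt) (C := 2 * gaussExp G)
    (fun θ _ ↦ by
      rw [norm_mul, norm_neg]
      exact (mul_le_of_le_one_left (norm_nonneg _) (Real.abs_sin_le_one θ)).trans (hD θ))
    (Set.right_mem_Icc.2 (by positivity)) (Set.left_mem_Icc.2 (by positivity))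
  have hG0 : 0 ≤ gaussExp G := by linarith [(abs_nonneg _).trans (hD 0)]
  have hstart : Φ 0 = ∑ a, ∑ b, T a b * gaussExp (P a * Q b) := by
    simp only [Φ, rotate_zero, ← map_mul, gaussExp_rename_inl]
  have hend : Φ (Real.pi / 2) = ∑ a, ∑ b, T a b * (gaussExp (P a) * gaussExp (Q b)) := by
    simp only [Φ, rotate_pi_div_two, gaussExp_rename_mul_rename]
  rw [hstart, hend, Real.norm_eq_abs, zero_sub, norm_neg, Real.norm_of_nonneg (by positivity)]
    at hmean
  exact hmean.trans (by nlinarith [Real.pi_le_four])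

end Interpolation

section MatrixDerivation

variable {R n : Type*} [CommRing R] [Algebra ℝ R] [Fintype n] (D : Derivation ℝ R R)

lemma map_derivation_matrix_mul (M N : Matrix n n R) :
    (M * N).map D = M.map D * N + M * N.map D := by
  ext a b
  simp only [Matrix.map_apply, Matrix.mul_apply, map_sum, Derivation.leibniz, smul_eq_mul,
    Matrix.add_apply, ← Finset.sum_add_distrib]
  exact Finset.sum_congr rfl fun x _ ↦ by ring

lemma map_derivation_matrix_pow [DecidableEq n] (M : Matrix n n R) (k : ℕ) :
    (M ^ k).map D = ∑ a ∈ Finset.range k, M ^ a * M.map D * M ^ (k - 1 - a) := by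
  induction k with
  | zero =>
    ext a b
    simp [Matrix.one_apply, apply_ite D]
  | succ k ih =>
    rw [pow_succ, map_derivation_matrix_mul, ih, Finset.sum_range_succ, Finset.sum_mul]
    refine congr_arg₂ _ (Finset.sum_congr rfl fun a ha ↦ ?_) (by simp)
    rw [mul_assoc, ← pow_succ, show k - 1 - a + 1 = k + 1 - 1 - a by grind]

end MatrixDerivation

section TraceExpansion

variable {M α β γ δ : Type*} [AddCommMonoid M]

lemma sum_reverse (s : Finset α) (t : Finset β) (u : Finset γ) (F : α → β → γ → M) :
    ∑ a ∈ s, ∑ b ∈ t, ∑ c ∈ u, F a b c = ∑ c ∈ u, ∑ b ∈ t, ∑ a ∈ s, F a b c :=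
  (Finset.sum_congr rfl fun _ _ ↦ Finset.sum_comm).trans <| Finset.sum_comm.trans <|
    Finset.sum_congr rfl fun _ _ ↦ Finset.sum_comm

lemma sum_rotate (s : Finset α) (t : Finset β) (u : Finset γ) (w : Finset δ)
    (F : α → β → γ → δ → M) :
    ∑ a ∈ s, ∑ b ∈ t, ∑ c ∈ u, ∑ d ∈ w, F a b c d
      = ∑ b ∈ t, ∑ c ∈ u, ∑ d ∈ w, ∑ a ∈ s, F a b c d :=
  Finset.sum_comm.trans <| Finset.sum_congr rfl fun _ _ ↦
    Finset.sum_comm.trans <| Finset.sum_congr rfl fun _ _ ↦ Finset.sum_comm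

lemma trace_mul_mul_mul {R : Type*} [CommRing R] [Fintype α] [Fintype β] [Fintype γ]
    [Fintype δ] (P : Matrix α β R) (Q : Matrix β γ R) (S : Matrix γ δ R) (T : Matrix δ α R) :
    (P * Q * S * T).trace = ∑ a, ∑ b, ∑ c, ∑ d, P a b * Q b c * S c d * T d a := by
  simp only [Matrix.trace, Matrix.diag_apply, Matrix.mul_apply, Finset.sum_mul]
  exact Finset.sum_congr rfl fun a _ ↦ sum_reverse ..

end TraceExpansion

section MatrixWords

open MvPolynomial Matrix

variable {ι n R S : Type*} [Fintype ι] [CommRing R] [CommRing S]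

/-- The linear matrix pencil `∑ i, g i • A i`. -/
def pencil {m n : Type*} (A : ι → Matrix m n ℝ) (g : ι → ℝ) : Matrix m n ℝ := ∑ i, g i • A i

/-- The pencil `∑ i, X i • A i` with indeterminate coefficients; evaluated at a standard Gaussian
vector it is the Gaussian random matrix with coefficients `A i`. -/
noncomputable def pencilPoly (A : ι → Matrix n n ℝ) : Matrix n n (MvPolynomial ι ℝ) :=
  ∑ i, (X i : MvPolynomial ι ℝ) • (A i).map C

lemma pencilPoly_apply (A : ι → Matrix n n ℝ) (a b : n) :
    pencilPoly A a b = ∑ i, X i * C (A i a b) := by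
  simp [pencilPoly, Matrix.sum_apply]

lemma map_eval_pencilPoly (A : ι → Matrix n n ℝ) (g : ι → ℝ) :
    (pencilPoly A).map (eval g) = pencil A g := by
  ext a b
  simp [pencilPoly_apply, pencil, Matrix.sum_apply]

lemma map_pderiv_pencilPoly (A : ι → Matrix n n ℝ) (j : ι) :
    (pencilPoly A).map (pderiv j) = (A j).map C := by
  classical
  ext a b
  simp [pencilPoly_apply, pderiv_X, Pi.single_apply]

variable [Fintype n]

lemma map_eval_pencilPoly_pow [DecidableEq n] (A : ι → Matrix n n ℝ) (g : ι → ℝ) (k : ℕ) :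
    (pencilPoly A ^ k).map (eval g) = pencil A g ^ k := by
  rw [← map_eval_pencilPoly]
  exact map_pow (eval g).mapMatrix (pencilPoly A) k

lemma map_eval_pderiv_pencilPoly_pow [DecidableEq n] (A : ι → Matrix n n ℝ) (j : ι) (g : ι → ℝ)
    (k : ℕ) :
    ((pencilPoly A ^ k).map (pderiv j)).map (eval g)
      = ∑ a ∈ Finset.range k, pencil A g ^ a * A j * pencil A g ^ (k - 1 - a) := by
  have hC : ((A j).map C).map (eval g) = A j := by ext; simp
  simp only [map_derivation_matrix_pow, map_pderiv_pencilPoly]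
  refine (map_sum (eval g).mapMatrix _ _).trans (Finset.sum_congr rfl fun a _ ↦ ?_)
  simp only [map_mul, RingHom.mapMatrix_apply, map_eval_pencilPoly_pow, hC]

/-- The moment matrix `𝔼 Xᵏ` of the Gaussian matrix `X = ∑ i, gᵢ • A i`. -/
noncomputable def momentMatrix [DecidableEq n] (A : ι → Matrix n n ℝ) (k : ℕ) : Matrix n n ℝ :=
  (pencilPoly A ^ k).map gaussExp

/-- The trace word `∑ i, tr (Aᵢ P Aᵢ Q B)` produced by Gaussian integration by parts. -/
def traceWord (A : ι → Matrix n n R) (B P Q : Matrix n n R) : R :=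
  ∑ i, (A i * P * A i * Q * B).trace

/-- The coefficient of `P s.1 s.2 * Q t.1 t.2` in `traceWord A B P Q`. -/
def traceWordCoeff (A : ι → Matrix n n R) (B : Matrix n n R) (s t : n × n) : R :=
  ∑ i, A i s.2 t.1 * (B * A i) t.2 s.1

lemma traceWord_eq_sum (A : ι → Matrix n n R) (B P Q : Matrix n n R) :
    traceWord A B P Q
      = ∑ s, ∑ t, traceWordCoeff A B s t * (P s.1 s.2 * Q t.1 t.2) := by
  have hterm (i : ι) : (A i * P * A i * Q * B).trace
      = ∑ s : n × n, ∑ t : n × n, A i s.2 t.1 * (B * A i) t.2 s.1 * (P s.1 s.2 * Q t.1 t.2) := by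
    rw [trace_mul_comm]
    simp only [← mul_assoc]
    rw [trace_mul_mul_mul, sum_rotate]
    simp only [Fintype.sum_prod_type]
    congr! 4
    ring
  simp only [traceWord, hterm, traceWordCoeff, Finset.sum_mul]
  rw [Finset.sum_comm]
  exact Finset.sum_congr rfl fun s _ ↦ Finset.sum_comm

lemma traceWordCoeff_map (φ : R →+* S) (A : ι → Matrix n n R) (B : Matrix n n R) (s t : n × n) :
    traceWordCoeff (fun i ↦ (A i).map φ) (B.map φ) s t = φ (traceWordCoeff A B s t) := by
  simp [traceWordCoeff, mul_apply]

variable [DecidableEq n]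

theorem gaussExp_trace_pencilPoly_pow_mul (A : ι → Matrix n n ℝ) (B : Matrix n n ℝ) (N : ℕ) :
    gaussExp (pencilPoly A ^ (N + 2) * B.map C).trace
      = ∑ k ∈ Finset.range (N + 1), gaussExp
          (traceWord (fun i ↦ (A i).map C) (B.map C)
            (pencilPoly A ^ k) (pencilPoly A ^ (N - k))) := by
  have hsplit : (pencilPoly A ^ (N + 2) * B.map C).trace
      = ∑ i, X i * ((A i).map C * pencilPoly A ^ (N + 1) * B.map C).trace := by
    rw [pow_succ', mul_assoc]
    nth_rw 1 [pencilPoly]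
    simp only [Finset.sum_mul, trace_sum, smul_mul_assoc, trace_smul, smul_eq_mul, mul_assoc]
  have hconst (M : Matrix n n ℝ) (i : ι) : (M.map C).map (pderiv i) = 0 := by ext; simp
  have htrace (M : Matrix n n (MvPolynomial ι ℝ)) (i : ι) :
      pderiv i M.trace = (M.map (pderiv i)).trace := by simp [trace]
  simp only [hsplit, map_sum, gaussExp_X_mul, htrace, map_derivation_matrix_mul, hconst,
    map_derivation_matrix_pow, map_pderiv_pencilPoly, zero_mul, mul_zero, zero_add, add_zero,
    Finset.mul_sum, Finset.sum_mul, trace_sum, traceWord, add_tsub_cancel_right]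
  rw [Finset.sum_comm]
  simp only [mul_assoc]

/-- The crossing word `∑ i j, tr (Aᵢ Yᵃ Aⱼ Yᵇ Aᵢ Xᶜ Aⱼ Xᵉ B)`. -/
def crossingWord (A : ι → Matrix n n ℝ) (B X Y : Matrix n n ℝ) (a b c e : ℕ) : ℝ :=
  ∑ i, ∑ j, (A i * Y ^ a * A j * Y ^ b * A i * X ^ c * A j * X ^ e * B).trace

lemma sum_traceWord_pderiv (A : ι → Matrix n n ℝ) (B X Y : Matrix n n ℝ) (k l : ℕ) :
    ∑ j, traceWord A B (∑ a ∈ Finset.range k, Y ^ a * A j * Y ^ (k - 1 - a))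
        (∑ c ∈ Finset.range l, X ^ c * A j * X ^ (l - 1 - c))
      = ∑ a ∈ Finset.range k, ∑ c ∈ Finset.range l,
          crossingWord A B X Y a (k - 1 - a) c (l - 1 - c) := by
  simp only [traceWord, crossingWord, Finset.mul_sum, Finset.sum_mul, trace_sum, ← mul_assoc]
  exact (sum_rotate ..).symm.trans (Finset.sum_congr rfl fun a _ ↦ sum_reverse ..)

theorem abs_gaussExp_traceWord_sub_le (A : ι → Matrix n n ℝ) (B : Matrix n n ℝ) (k l : ℕ)
    (G : MvPolynomial ι ℝ)
    (hG : ∀ g h : ι → ℝ, ∀ a < k, ∀ c < l,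
      |crossingWord A B (pencil A g) (pencil A h) a (k - 1 - a) c (l - 1 - c)|
        ≤ eval g G + eval h G) :
    |gaussExp (traceWord (fun i ↦ (A i).map C) (B.map C) (pencilPoly A ^ k) (pencilPoly A ^ l))
        - traceWord A B (momentMatrix A k) (momentMatrix A l)| ≤ 4 * k * l * gaussExp G := by
  have hderiv (g h : ι → ℝ) : |∑ j, ∑ s : n × n, ∑ t : n × n, traceWordCoeff A B s t *
      (eval g (pderiv j ((pencilPoly A ^ k) s.1 s.2))
        * eval h (pderiv j ((pencilPoly A ^ l) t.1 t.2)))|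
      ≤ eval g (C (k * l : ℝ) * G) + eval h (C (k * l : ℝ) * G) := by
    calc _ = |∑ a ∈ Finset.range k, ∑ c ∈ Finset.range l,
            crossingWord A B (pencil A h) (pencil A g) a (k - 1 - a) c (l - 1 - c)| := by
          simp only [← sum_traceWord_pderiv, ← map_eval_pderiv_pencilPoly_pow, traceWord_eq_sum,
            map_apply]
      _ ≤ ∑ _a ∈ Finset.range k, ∑ _c ∈ Finset.range l, (eval g G + eval h G) := by
          refine (Finset.abs_sum_le_sum_abs _ _).trans (Finset.sum_le_sum fun a ha ↦
            (Finset.abs_sum_le_sum_abs _ _).trans (Finset.sum_le_sum fun c hc ↦ ?_))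
          exact (hG h g a (Finset.mem_range.1 ha) c (Finset.mem_range.1 hc)).trans_eq (add_comm _ _)
      _ = _ := by
          simp only [Finset.sum_const, Finset.card_range, nsmul_eq_mul, map_mul, eval_C]
          ring
  have h := abs_gaussExp_mul_sub_le (traceWordCoeff A B)
    (fun s ↦ (pencilPoly A ^ k) s.1 s.2) (fun t ↦ (pencilPoly A ^ l) t.1 t.2) _ hderiv
  rw [gaussExp_C_mul] at h
  simp only [traceWord_eq_sum, traceWordCoeff_map, map_sum, gaussExp_C_mul]
  exact h.trans_eq (by ring)

end MatrixWords

section FrobeniusNorm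

open Matrix
open scoped Matrix.Norms.L2Operator

variable {l m n : Type*} [Fintype l] [Fintype m] [Fintype n]

lemma norm_toLp_sq_eq_dotProduct (x : n → ℝ) : ‖WithLp.toLp 2 x‖ ^ 2 = x ⬝ᵥ x := by
  rw [EuclideanSpace.real_norm_sq_eq]
  simp only [dotProduct, sq]

lemma dotProduct_mulVec_self_le [DecidableEq n] (M : Matrix m n ℝ) (x : n → ℝ) :
    (M *ᵥ x) ⬝ᵥ (M *ᵥ x) ≤ ‖M‖ ^ 2 * (x ⬝ᵥ x) := by
  rw [← norm_toLp_sq_eq_dotProduct, ← norm_toLp_sq_eq_dotProduct, ← mul_pow]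
  gcongr
  exact l2_opNorm_mulVec M (WithLp.toLp 2 x)

lemma l2_opNorm_transpose [DecidableEq m] [DecidableEq n] (M : Matrix m n ℝ) : ‖Mᵀ‖ = ‖M‖ := by
  rw [← conjTranspose_eq_transpose_of_trivial, l2_opNorm_conjTranspose]

lemma frobNormSq_transpose (M : Matrix m n ℝ) : frobNormSq Mᵀ = frobNormSq M :=
  Finset.sum_comm

lemma frobNormSq_eq_sum_col (M : Matrix m n ℝ) :
    frobNormSq M = ∑ j, M.col j ⬝ᵥ M.col j := by
  rw [← frobNormSq_transpose]
  simp [frobNormSq, dotProduct, sq]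

lemma frobNormSq_mul_le [DecidableEq m] (L : Matrix l m ℝ) (M : Matrix m n ℝ) :
    frobNormSq (L * M) ≤ ‖L‖ ^ 2 * frobNormSq M := by
  rw [frobNormSq_eq_sum_col, frobNormSq_eq_sum_col, Finset.mul_sum]
  exact Finset.sum_le_sum fun j _ ↦ dotProduct_mulVec_self_le L (M.col j)

lemma frobNormSq_mul_mul_le {k : Type*} [Fintype k] [DecidableEq m] [DecidableEq k]
    (L : Matrix l m ℝ) (M : Matrix m n ℝ) (R : Matrix n k ℝ) :
    frobNormSq (L * M * R) ≤ ‖L‖ ^ 2 * ‖R‖ ^ 2 * frobNormSq M := by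
  classical
  calc frobNormSq (L * M * R) = frobNormSq (Rᵀ * (L * M)ᵀ) := by
        rw [← transpose_mul, frobNormSq_transpose]
    _ ≤ ‖R‖ ^ 2 * frobNormSq (L * M) := by
        rw [← frobNormSq_transpose (L * M), ← l2_opNorm_transpose R]
        exact frobNormSq_mul_le _ _
    _ ≤ ‖R‖ ^ 2 * (‖L‖ ^ 2 * frobNormSq M) := by
        gcongr
        exact frobNormSq_mul_le L M
    _ = _ := by ring

end FrobeniusNorm

section ParametersLE

open Matrix
open scoped Matrix.Norms.L2Operator

variable {ι l m n : Type*} [Fintype ι] [Fintype l] [Fintype m] [Fintype n]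

/-- Upper bounds `s` and `v` for the squares of the matrix parameters of the Gaussian matrix
`X = ∑ i, gᵢ • A i`: `s` dominates the variance parameters `‖𝔼 XᵀX‖` and `‖𝔼 XXᵀ‖`, and `v`
dominates `‖Cov X‖`. Both are phrased through the associated quadratic forms. -/
structure ParametersLE (A : ι → Matrix m n ℝ) (s v : ℝ) : Prop where
  s_nonneg : 0 ≤ s
  v_nonneg : 0 ≤ v
  sum_mulVec_le (x : n → ℝ) : ∑ i, (A i *ᵥ x) ⬝ᵥ (A i *ᵥ x) ≤ s * (x ⬝ᵥ x)
  sum_transpose_mulVec_le (x : m → ℝ) : ∑ i, ((A i)ᵀ *ᵥ x) ⬝ᵥ ((A i)ᵀ *ᵥ x) ≤ s * (x ⬝ᵥ x)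
  frobNormSq_pencil_le (c : ι → ℝ) : frobNormSq (pencil A c) ≤ v * ∑ i, c i ^ 2

namespace ParametersLE

variable {A : ι → Matrix m n ℝ} {s v : ℝ}

lemma transpose (hA : ParametersLE A s v) : ParametersLE (fun i ↦ (A i)ᵀ) s v where
  s_nonneg := hA.s_nonneg
  v_nonneg := hA.v_nonneg
  sum_mulVec_le := hA.sum_transpose_mulVec_le
  sum_transpose_mulVec_le := hA.sum_mulVec_le
  frobNormSq_pencil_le c := by
    have h : pencil (fun i ↦ (A i)ᵀ) c = (pencil A c)ᵀ := by simp [pencil, transpose_sum]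
    rw [h, frobNormSq_transpose]
    exact hA.frobNormSq_pencil_le c

lemma sum_mul_mul_mulVec_le [DecidableEq m] {k : Type*} [Fintype k] [DecidableEq k]
    (hA : ParametersLE A s v) (L : Matrix l m ℝ) (R : Matrix n k ℝ) (x : k → ℝ) :
    ∑ i, ((L * A i * R) *ᵥ x) ⬝ᵥ ((L * A i * R) *ᵥ x) ≤ ‖L‖ ^ 2 * ‖R‖ ^ 2 * s * (x ⬝ᵥ x) := by
  have hs := hA.s_nonneg
  calc ∑ i, ((L * A i * R) *ᵥ x) ⬝ᵥ ((L * A i * R) *ᵥ x)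
      ≤ ∑ i, ‖L‖ ^ 2 * ((A i *ᵥ (R *ᵥ x)) ⬝ᵥ (A i *ᵥ (R *ᵥ x))) := by
        simp only [← mulVec_mulVec]
        exact Finset.sum_le_sum fun i _ ↦ dotProduct_mulVec_self_le L _
    _ ≤ ‖L‖ ^ 2 * (s * ((R *ᵥ x) ⬝ᵥ (R *ᵥ x))) := by
        rw [← Finset.mul_sum]
        gcongr
        exact hA.sum_mulVec_le _
    _ ≤ ‖L‖ ^ 2 * (s * (‖R‖ ^ 2 * (x ⬝ᵥ x))) := by
        gcongr
        exact dotProduct_mulVec_self_le R x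
    _ = _ := by ring

theorem mul_mul [DecidableEq m] {k : Type*} [Fintype k] [DecidableEq k]
    (hA : ParametersLE A s v) (L : Matrix l m ℝ) (R : Matrix n k ℝ) :
    ParametersLE (fun i ↦ L * A i * R) (‖L‖ ^ 2 * ‖R‖ ^ 2 * s) (‖L‖ ^ 2 * ‖R‖ ^ 2 * v) where
  s_nonneg := mul_nonneg (by positivity) hA.s_nonneg
  v_nonneg := mul_nonneg (by positivity) hA.v_nonneg
  sum_mulVec_le := hA.sum_mul_mul_mulVec_le L R
  sum_transpose_mulVec_le x := by
    classical
    have h := hA.transpose.sum_mul_mul_mulVec_le Rᵀ Lᵀ x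
    rw [l2_opNorm_transpose, l2_opNorm_transpose, mul_comm (‖R‖ ^ 2)] at h
    simpa only [transpose_mul, Matrix.mul_assoc] using h
  frobNormSq_pencil_le c := by
    have h : pencil (fun i ↦ L * A i * R) c = L * pencil A c * R := by
      simp [pencil, Matrix.mul_sum, Matrix.sum_mul]
    rw [h, mul_assoc]
    exact (frobNormSq_mul_mul_le L _ R).trans
      (mul_le_mul_of_nonneg_left (hA.frobNormSq_pencil_le c) (by positivity))

variable {α β γ : Type*} [Fintype α] [Fintype β] [Fintype γ]

lemma sum_sq_le (hA : ParametersLE A s v) (p : ι → α → ℝ) :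
    ∑ x, ∑ y, ∑ z, (∑ i, p i x * A i y z) ^ 2 ≤ v * ∑ i, p i ⬝ᵥ p i := by
  simp only [dotProduct, ← sq]
  rw [Finset.sum_comm (f := fun i x ↦ p i x ^ 2), Finset.mul_sum]
  refine Finset.sum_le_sum fun x _ ↦ ?_
  simpa [frobNormSq, pencil, Matrix.sum_apply] using hA.frobNormSq_pencil_le (p · x)

/-- The two factors decouple by Cauchy–Schwarz over the triples `(x, y, z)`. -/
theorem sum_abs_mul_abs_le {Q : ι → Matrix α β ℝ} {R : ι → Matrix β γ ℝ} {s t v w : ℝ}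
    (hQ : ParametersLE Q s v) (hR : ParametersLE R t w) (p : ι → α → ℝ) (q : ι → γ → ℝ) :
    ∑ x, ∑ y, ∑ z, |∑ i, p i x * R i y z| * |∑ j, Q j x y * q j z|
      ≤ √(w * ∑ i, p i ⬝ᵥ p i) * √(v * ∑ j, q j ⬝ᵥ q j) := by
  have hCS := Real.sum_mul_le_sqrt_mul_sqrt (Finset.univ : Finset (α × β × γ))
    (fun t ↦ |∑ i, p i t.1 * R i t.2.1 t.2.2|) (fun t ↦ |∑ j, Q j t.1 t.2.1 * q j t.2.2|)
  simp only [Fintype.sum_prod_type, sq_abs] at hCS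
  refine hCS.trans (mul_le_mul (Real.sqrt_le_sqrt (hR.sum_sq_le p)) (Real.sqrt_le_sqrt ?_)
    (Real.sqrt_nonneg _) (Real.sqrt_nonneg _))
  refine le_trans (le_of_eq ?_) (hQ.sum_sq_le q)
  simp only [mul_comm (Q _ _ _)]
  exact (Finset.sum_congr rfl fun _ _ ↦ Finset.sum_comm).trans Finset.sum_comm

end ParametersLE

end ParametersLE

section CrossingWord

open Matrix
open scoped Matrix.Norms.L2Operator

variable {ι α β γ n : Type*} [Fintype ι] [Fintype α] [Fintype β] [Fintype γ] [Fintype n]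

lemma sum_sum_sum_mul {τ R : Type*} [CommSemiring R] [Fintype τ] (w : τ → R) (f g : ι → τ → R) :
    ∑ i, ∑ j, ∑ t, w t * (f i t * g j t) = ∑ t, w t * ((∑ i, f i t) * ∑ j, g j t) := by
  simp_rw [Finset.sum_mul_sum, Finset.mul_sum]
  exact (Finset.sum_congr rfl fun _ _ ↦ Finset.sum_comm).trans Finset.sum_comm

lemma dotProduct_mulVec_mulVec {R : Type*} [CommRing R] (p : α → R) (M : Matrix α β R)
    (N : Matrix β γ R) (q : γ → R) :
    p ⬝ᵥ (M *ᵥ (N *ᵥ q))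
      = ∑ t : α × β × γ, p t.1 * N t.2.1 t.2.2 * (M t.1 t.2.1 * q t.2.2) := by
  simp only [dotProduct, mulVec, Fintype.sum_prod_type, Finset.mul_sum]
  congr! 3
  ring

variable [DecidableEq n] {A : ι → Matrix n n ℝ} {s v : ℝ}

lemma crossingWord_vecMulVec (A : ι → Matrix n n ℝ) (X Y : Matrix n n ℝ) (x y : n → ℝ)
    (a b c e : ℕ) :
    crossingWord A (vecMulVec y x) X Y a b c e
      = ∑ t : n × n × n, (∑ i, ((A i * Y ^ a)ᵀ *ᵥ x) t.1 * (Y ^ b * A i * X ^ c) t.2.1 t.2.2)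
          * ∑ j, A j t.1 t.2.1 * ((A j * X ^ e) *ᵥ y) t.2.2 := by
  have hterm (i j : ι) :
      (A i * Y ^ a * A j * Y ^ b * A i * X ^ c * A j * X ^ e * vecMulVec y x).trace
        = ∑ t : n × n × n, 1 * ((((A i * Y ^ a)ᵀ *ᵥ x) t.1 * (Y ^ b * A i * X ^ c) t.2.1 t.2.2)
            * (A j t.1 t.2.1 * ((A j * X ^ e) *ᵥ y) t.2.2)) := by
    simp only [one_mul, ← dotProduct_mulVec_mulVec, mul_vecMulVec, trace_vecMulVec]
    rw [dotProduct_comm, mulVec_transpose, ← dotProduct_mulVec]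
    simp only [mulVec_mulVec, mul_assoc]
  simp_rw [crossingWord, hterm, sum_sum_sum_mul, one_mul]

variable [Nonempty n]

theorem abs_crossingWord_vecMulVec_le (hA : ParametersLE A s v) (X Y : Matrix n n ℝ)
    (x y : n → ℝ) (a b c e : ℕ) :
    |crossingWord A (vecMulVec y x) X Y a b c e|
      ≤ v * s * (‖Y‖ ^ (a + b) * ‖X‖ ^ (c + e)) * (‖WithLp.toLp 2 x‖ * ‖WithLp.toLp 2 y‖) := by
  have hv := hA.v_nonneg
  have hs := hA.s_nonneg
  have hleft := (hA.mul_mul (1 : Matrix n n ℝ) (Y ^ a)).sum_transpose_mulVec_le x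
  have hright := (hA.mul_mul (1 : Matrix n n ℝ) (X ^ e)).sum_mulVec_le y
  simp only [norm_one, one_pow, one_mul, ← norm_toLp_sq_eq_dotProduct]
    at hleft hright
  rw [crossingWord_vecMulVec]
  calc _ ≤ ∑ u, ∑ v, ∑ w, |∑ i, ((A i * Y ^ a)ᵀ *ᵥ x) u * (Y ^ b * A i * X ^ c) v w|
          * |∑ j, A j u v * ((A j * X ^ e) *ᵥ y) w| := by
        simp only [← abs_mul]
        exact (Finset.abs_sum_le_sum_abs _ _).trans_eq (by simp only [Fintype.sum_prod_type])
    _ ≤ √(‖Y ^ b‖ ^ 2 * ‖X ^ c‖ ^ 2 * v * ∑ i, ((A i * Y ^ a)ᵀ *ᵥ x) ⬝ᵥ ((A i * Y ^ a)ᵀ *ᵥ x))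
          * √(v * ∑ j, ((A j * X ^ e) *ᵥ y) ⬝ᵥ ((A j * X ^ e) *ᵥ y)) :=
        hA.sum_abs_mul_abs_le (hA.mul_mul (Y ^ b) (X ^ c)) _ _
    _ ≤ √((‖Y‖ ^ b) ^ 2 * (‖X‖ ^ c) ^ 2 * v * ((‖Y‖ ^ a) ^ 2 * s * ‖WithLp.toLp 2 x‖ ^ 2))
          * √(v * ((‖X‖ ^ e) ^ 2 * s * ‖WithLp.toLp 2 y‖ ^ 2)) := by
        simp only [← norm_toLp_sq_eq_dotProduct]
        gcongr
        · exact norm_pow_le Y b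
        · exact norm_pow_le X c
        · refine hleft.trans ?_
          gcongr
          exact norm_pow_le Y a
        · refine hright.trans ?_
          gcongr
          exact norm_pow_le X e
    _ = √((v * s * (‖Y‖ ^ (a + b) * ‖X‖ ^ (c + e)
          * (‖WithLp.toLp 2 x‖ * ‖WithLp.toLp 2 y‖))) ^ 2) := by
        rw [← Real.sqrt_mul (by positivity)]
        ring_nf
    _ = _ := by
        rw [Real.sqrt_sq (by positivity)]
        ring

end CrossingWord

section PowerSums

lemma prod_pow_le_sum_pow {τ : Type*} [Fintype τ] [Nonempty τ] (x : τ → ℝ) (hx : ∀ i, 0 ≤ x i)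
    (k : τ → ℕ) : ∏ i, x i ^ k i ≤ ∑ i, x i ^ ∑ j, k j := by
  obtain ⟨m, hm⟩ := Finite.exists_max x
  calc ∏ i, x i ^ k i ≤ ∏ i, x m ^ k i :=
        Finset.prod_le_prod (fun i _ ↦ pow_nonneg (hx i) _)
          fun i _ ↦ pow_le_pow_left₀ (hx i) (hm i) _
    _ = x m ^ ∑ j, k j := Finset.prod_pow_eq_pow_sum ..
    _ ≤ ∑ i, x i ^ ∑ j, k j :=
        Finset.single_le_sum (f := fun i ↦ x i ^ ∑ j, k j) (fun i _ ↦ pow_nonneg (hx i) _)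
          (Finset.mem_univ m)

lemma abs_pow_mul_pow_mul_pow_mul_pow_le (x y z w : ℝ) {a b c e : ℕ} (h : Even (a + b + c + e)) :
    |x ^ a * y ^ b * z ^ c * w ^ e|
      ≤ x ^ (a + b + c + e) + y ^ (a + b + c + e) + z ^ (a + b + c + e) + w ^ (a + b + c + e) := by
  have := prod_pow_le_sum_pow ![|x|, |y|, |z|, |w|]
    (by simp [Fin.forall_fin_succ]) ![a, b, c, e]
  simpa [Fin.prod_univ_four, Fin.sum_univ_four, abs_mul, abs_pow, h.pow_abs] using this

end PowerSums

section Diagonalization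

open Matrix
open scoped Matrix.Norms.L2Operator

variable {n : Type*} [Fintype n] [DecidableEq n] {X : Matrix n n ℝ}

lemma exists_orthogonal_pow_eq (hX : X.IsSymm) :
    ∃ U ∈ orthogonalGroup n ℝ, ∃ μ : n → ℝ,
      ∀ k : ℕ, X ^ k = U * diagonal (fun i ↦ μ i ^ k) * Uᵀ := by
  have hH : X.IsHermitian := by
    rwa [IsHermitian, conjTranspose_eq_transpose_of_trivial]
  refine ⟨hH.eigenvectorUnitary, hH.eigenvectorUnitary.2, hH.eigenvalues, fun k ↦ ?_⟩
  conv_lhs => rw [hH.spectral_theorem, ← map_pow, diagonal_pow]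
  rfl

lemma trace_orthogonal_conj {U : Matrix n n ℝ} (hU : U ∈ orthogonalGroup n ℝ) (D : Matrix n n ℝ) :
    (U * D * Uᵀ).trace = D.trace := by
  rw [trace_mul_cycle, (mem_orthogonalGroup_iff' n ℝ).1 hU, Matrix.one_mul]

lemma norm_orthogonal [Nonempty n] {U : Matrix n n ℝ} (hU : U ∈ orthogonalGroup n ℝ) : ‖U‖ = 1 :=
  CStarRing.norm_of_mem_unitary hU

lemma trace_pow_nonneg (hX : X.IsSymm) {k : ℕ} (hk : Even k) : 0 ≤ (X ^ k).trace := by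
  obtain ⟨U, hU, μ, hμ⟩ := exists_orthogonal_pow_eq hX
  rw [hμ, trace_orthogonal_conj hU, trace_diagonal]
  exact Finset.sum_nonneg fun i _ ↦ hk.pow_nonneg _

lemma norm_pow_le_trace_pow [Nonempty n] (hX : X.IsSymm) {k : ℕ} (hk : Even k) :
    ‖X‖ ^ k ≤ (X ^ k).trace := by
  obtain ⟨U, hU, μ, hμ⟩ := exists_orthogonal_pow_eq hX
  have hnorm : ‖X‖ ≤ ‖μ‖ := by
    calc ‖X‖ = ‖U * diagonal μ * Uᵀ‖ := by simpa using congr_arg norm (hμ 1)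
      _ ≤ ‖U‖ * ‖diagonal μ‖ * ‖Uᵀ‖ := (norm_mul_le _ _).trans (by gcongr; exact norm_mul_le _ _)
      _ = ‖μ‖ := by rw [l2_opNorm_transpose, norm_orthogonal hU, l2_opNorm_diagonal]; ring
  obtain ⟨i, hi⟩ := Finite.exists_max fun i ↦ ‖μ i‖
  rw [hμ, trace_orthogonal_conj hU, trace_diagonal]
  calc ‖X‖ ^ k ≤ ‖μ i‖ ^ k := by
        gcongr
        exact hnorm.trans ((pi_norm_le_iff_of_nonneg (norm_nonneg _)).2 hi)
    _ = μ i ^ k := by rw [Real.norm_eq_abs, hk.pow_abs]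
    _ ≤ ∑ i, μ i ^ k := Finset.single_le_sum (f := fun i ↦ μ i ^ k) (fun i _ ↦ hk.pow_nonneg _)
        (Finset.mem_univ i)

end Diagonalization

section CrossingTrace

open Matrix
open scoped Matrix.Norms.L2Operator

variable {ι n : Type*} [Fintype ι]

/-- Absolute value of the summand with matrix indices `e, x, y, z` in the expansion of
`∑ i j, tr (P i * Q j * R i * S j)`. -/
def crossingKernel {α β γ ε : Type*} (P : ι → Matrix ε α ℝ) (Q : ι → Matrix α β ℝ)
    (R : ι → Matrix β γ ℝ) (S : ι → Matrix γ ε ℝ) (e : ε) (x : α) (y : β) (z : γ) : ℝ :=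
  |∑ i, P i e x * R i y z| * |∑ j, Q j x y * S j z e|

lemma crossingKernel_rotate (P Q R S : ι → Matrix n n ℝ) (e x y z : n) :
    crossingKernel P Q R S e x y z = crossingKernel Q R S P x y z e := by
  simp only [crossingKernel, mul_comm]

variable [Fintype n] {P Q R S : ι → Matrix n n ℝ} {s v : ℝ}

lemma sum_mul_crossingKernel_le (hP : ParametersLE P s v) (hQ : ParametersLE Q s v)
    (hR : ParametersLE R s v) (hS : ParametersLE S s v) (w : n → ℝ) (hw : ∀ e, 0 ≤ w e) :
    ∑ e, ∑ x, ∑ y, ∑ z, w e * crossingKernel P Q R S e x y z ≤ v * s * ∑ e, w e := by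
  classical
  have hv := hP.v_nonneg
  simp only [← Finset.mul_sum]
  rw [Finset.mul_sum]
  refine Finset.sum_le_sum fun e _ ↦ ?_
  rw [mul_comm]
  refine mul_le_mul_of_nonneg_right ?_ (hw e)
  have hrow := hP.sum_transpose_mulVec_le (Pi.single e 1)
  have hcol := hS.sum_mulVec_le (Pi.single e 1)
  simp only [mulVec_single_one, single_one_dotProduct, Pi.single_eq_same, mul_one] at hrow hcol
  calc _ ≤ _ := hQ.sum_abs_mul_abs_le hR (fun i ↦ P i e) fun j z ↦ S j z e
    _ ≤ √(v * s) * √(v * s) := by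
        gcongr
        · exact hrow
        · exact hcol
    _ = v * s := Real.mul_self_sqrt (mul_nonneg hv hP.s_nonneg)

variable [DecidableEq n]

lemma sum_trace_mul_diagonal (P Q R S : ι → Matrix n n ℝ) (p q r t : n → ℝ) :
    ∑ i, ∑ j, (P i * diagonal p * Q j * diagonal q * R i * diagonal r * S j * diagonal t).trace
      = ∑ k : n × n × n × n, p k.2.1 * q k.2.2.1 * r k.2.2.2 * t k.1
          * ((∑ i, P i k.1 k.2.1 * R i k.2.2.1 k.2.2.2)
            * ∑ j, Q j k.2.1 k.2.2.1 * S j k.2.2.2 k.1) := by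
  have hterm (i j : ι) :
      (P i * diagonal p * Q j * diagonal q * R i * diagonal r * S j * diagonal t).trace
        = ∑ k : n × n × n × n, p k.2.1 * q k.2.2.1 * r k.2.2.2 * t k.1
          * ((P i k.1 k.2.1 * R i k.2.2.1 k.2.2.2) * (Q j k.2.1 k.2.2.1 * S j k.2.2.2 k.1)) := by
    have h := trace_mul_mul_mul (P i * diagonal p) (Q j * diagonal q) (R i * diagonal r)
      (S j * diagonal t)
    simp only [← Matrix.mul_assoc] at h
    simp only [h, mul_diagonal, Fintype.sum_prod_type]
    congr! 4
    ring
  simp_rw [hterm, sum_sum_sum_mul]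

lemma abs_sum_trace_mul_diagonal_le (hP : ParametersLE P s v) (hQ : ParametersLE Q s v)
    (hR : ParametersLE R s v) (hS : ParametersLE S s v) (p q r t wp wq wr wt : n → ℝ)
    (hwp : ∀ x, 0 ≤ wp x) (hwq : ∀ x, 0 ≤ wq x) (hwr : ∀ x, 0 ≤ wr x) (hwt : ∀ x, 0 ≤ wt x)
    (h : ∀ x y z e, |p x * q y * r z * t e| ≤ wp x + wq y + wr z + wt e) :
    |∑ i, ∑ j, (P i * diagonal p * Q j * diagonal q * R i * diagonal r * S j * diagonal t).trace|
      ≤ v * s * (∑ x, wp x + ∑ x, wq x + ∑ x, wr x + ∑ x, wt x) := by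
  have hp : ∑ e, ∑ x, ∑ y, ∑ z, wp x * crossingKernel P Q R S e x y z ≤ v * s * ∑ x, wp x := by
    rw [sum_rotate]
    simp only [crossingKernel_rotate P]
    exact sum_mul_crossingKernel_le hQ hR hS hP wp hwp
  have hq : ∑ e, ∑ x, ∑ y, ∑ z, wq y * crossingKernel P Q R S e x y z ≤ v * s * ∑ x, wq x := by
    rw [sum_rotate, sum_rotate]
    simp only [crossingKernel_rotate P, crossingKernel_rotate Q]
    exact sum_mul_crossingKernel_le hR hS hP hQ wq hwq
  have hr : ∑ e, ∑ x, ∑ y, ∑ z, wr z * crossingKernel P Q R S e x y z ≤ v * s * ∑ x, wr x := by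
    rw [sum_rotate, sum_rotate, sum_rotate]
    simp only [crossingKernel_rotate P, crossingKernel_rotate Q, crossingKernel_rotate R]
    exact sum_mul_crossingKernel_le hS hP hQ hR wr hwr
  have ht := sum_mul_crossingKernel_le hP hQ hR hS wt hwt
  rw [sum_trace_mul_diagonal]
  calc _ ≤ ∑ k : n × n × n × n, (wp k.2.1 + wq k.2.2.1 + wr k.2.2.2 + wt k.1)
          * crossingKernel P Q R S k.1 k.2.1 k.2.2.1 k.2.2.2 := by
        refine (Finset.abs_sum_le_sum_abs _ _).trans (Finset.sum_le_sum fun k _ ↦ ?_)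
        rw [abs_mul, abs_mul (∑ i, _)]
        exact mul_le_mul_of_nonneg_right (h ..) (by positivity)
    _ ≤ _ := by
        simp only [Fintype.sum_prod_type, add_mul, Finset.sum_add_distrib, mul_add]
        gcongr

variable [Nonempty n] {A : ι → Matrix n n ℝ}

theorem abs_crossingWord_one_le (hA : ParametersLE A s v) {X Y : Matrix n n ℝ} (hX : X.IsSymm)
    (hY : Y.IsSymm) {a b c e : ℕ} (h : Even (a + b + c + e)) :
    |crossingWord A 1 X Y a b c e|
      ≤ v * s * (2 * (X ^ (a + b + c + e)).trace + 2 * (Y ^ (a + b + c + e)).trace) := by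
  obtain ⟨U, hU, μ, hμ⟩ := exists_orthogonal_pow_eq hX
  obtain ⟨V, hV, lam, hlam⟩ := exists_orthogonal_pow_eq hY
  have hconj {O O' : Matrix n n ℝ} (hO : O ∈ orthogonalGroup n ℝ) (hO' : O' ∈ orthogonalGroup n ℝ) :
      ParametersLE (fun i ↦ Oᵀ * A i * O') s v := by
    simpa [l2_opNorm_transpose, norm_orthogonal hO, norm_orthogonal hO'] using hA.mul_mul Oᵀ O'
  have hword : crossingWord A 1 X Y a b c e = ∑ i, ∑ j,
      ((Uᵀ * A i * V) * diagonal (fun k ↦ lam k ^ a) * (Vᵀ * A j * V) * diagonal (fun k ↦ lam k ^ b)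
        * (Vᵀ * A i * U) * diagonal (fun k ↦ μ k ^ c) * (Uᵀ * A j * U)
        * diagonal (fun k ↦ μ k ^ e)).trace := by
    refine Finset.sum_congr rfl fun i _ ↦ Finset.sum_congr rfl fun j _ ↦ ?_
    rw [mul_one, hμ, hμ, hlam, hlam, ← mul_assoc, trace_mul_comm]
    simp only [mul_assoc]
  rw [hword, hμ, hlam, trace_orthogonal_conj hU, trace_orthogonal_conj hV, trace_diagonal,
    trace_diagonal]
  refine (abs_sum_trace_mul_diagonal_le (hconj hU hV) (hconj hV hV) (hconj hV hU) (hconj hU hU)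
    _ _ _ _ _ _ _ _ (fun x ↦ h.pow_nonneg _) (fun x ↦ h.pow_nonneg _) (fun x ↦ h.pow_nonneg _)
    (fun x ↦ h.pow_nonneg _)
    fun x y z w ↦ abs_pow_mul_pow_mul_pow_mul_pow_le (lam x) (lam y) (μ z) (μ w) h).trans_eq ?_
  ring

end CrossingTrace

section Recursion

lemma catalan_le_four_pow (k : ℕ) : catalan k ≤ 4 ^ k := by
  rw [catalan_eq_centralBinom_div]
  exact (Nat.div_le_self ..).trans (Nat.centralBinom_le_four_pow k)

lemma one_le_catalan (k : ℕ) : 1 ≤ catalan k := by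
  refine Nat.one_le_iff_ne_zero.2 fun h ↦ (Nat.centralBinom_pos k).ne ?_
  rw [← succ_mul_catalan_eq_centralBinom, h, mul_zero]

theorem le_catalan_mul_pow {K : ℕ} {s r : ℝ} {q ε : ℕ → ℝ} (hs : 0 ≤ s) (hsr : s ≤ r / 4)
    (hr : 0 ≤ r) (hq : ∀ k, 0 ≤ q k) (hq0 : q 0 ≤ 1) (hε : ∀ k < K, ε k ≤ 1 / 2 * r ^ (k + 1))
    (hrec : ∀ k < K, q (k + 1) ≤ s * ∑ b ∈ Finset.range (k + 1), q b * q (k - b) + ε k) :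
    ∀ k ≤ K, q k ≤ catalan k * r ^ k := by
  intro k
  induction k using Nat.strong_induction_on with
  | _ k ih =>
  intro hk
  rcases k with _ | k
  · simpa using hq0
  have hconv : ∑ b ∈ Finset.range (k + 1), q b * q (k - b) ≤ catalan (k + 1) * r ^ k := by
    rw [catalan_succ', Finset.Nat.sum_antidiagonal_eq_sum_range_succ_mk]
    push_cast
    rw [Finset.sum_mul]
    refine Finset.sum_le_sum fun b hb ↦ ?_
    have hbk : b ≤ k := Finset.mem_range_succ_iff.1 hb
    calc q b * q (k - b)
        ≤ (catalan b * r ^ b) * (catalan (k - b) * r ^ (k - b)) :=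
          mul_le_mul (ih b (by lia) (by lia)) (ih (k - b) (by lia) (by lia)) (hq _) (by positivity)
      _ = catalan b * catalan (k - b) * r ^ k := by
          rw [mul_mul_mul_comm, ← pow_add, Nat.add_sub_cancel' hbk]
  have hcat : (1 : ℝ) ≤ catalan (k + 1) := by exact_mod_cast one_le_catalan (k + 1)
  calc q (k + 1)
      ≤ r / 4 * (catalan (k + 1) * r ^ k) + 1 / 2 * r ^ (k + 1) :=
        (hrec k (by lia)).trans (add_le_add ((mul_le_mul_of_nonneg_left hconv hs).trans
          (by gcongr)) (hε k (by lia)))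
    _ = 1 / 4 * (catalan (k + 1) * r ^ (k + 1)) + 1 / 2 * (1 * r ^ (k + 1)) := by ring
    _ ≤ 1 / 4 * (catalan (k + 1) * r ^ (k + 1)) + 1 / 2 * (catalan (k + 1) * r ^ (k + 1)) := by
        gcongr
    _ ≤ catalan (k + 1) * r ^ (k + 1) := by
        linarith [show 0 ≤ catalan (k + 1) * r ^ (k + 1) by positivity]

lemma sum_geometric_le (P : ℕ) : ∑ j ∈ Finset.range P, (1 / 64 : ℝ) ^ j ≤ 2 := by
  have hsum := summable_geometric_of_lt_one (r := (1 / 64 : ℝ)) (by norm_num) (by norm_num)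
  refine (hsum.sum_le_tsum _ fun _ _ ↦ by positivity).trans ?_
  rw [tsum_geometric_of_lt_one (by norm_num) (by norm_num)]
  norm_num

theorem sum_range_le_of_symm {P K : ℕ} (hP : 0 < P) (hPK : P ≤ 64 ^ K) {c : ℝ} (hc : 0 ≤ c)
    {φ : ℕ → ℝ} (hφ : ∀ j ≤ K, j < P → φ j ≤ c * (1 / 64) ^ j)
    (hsymm : ∀ j < P, φ j = φ (P - 1 - j))
    (hmid : ∀ k j, k ≤ j → j + k ≤ P - 1 → φ j ≤ 2 * φ k) :
    ∑ j ∈ Finset.range P, φ j ≤ 6 * c := by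
  have hpow : (1 / 64 : ℝ) ^ K ≤ 1 / P := by
    rw [one_div_pow]
    exact one_div_le_one_div_of_le (by positivity) (by exact_mod_cast hPK)
  have hterm : ∀ j ∈ Finset.range P,
      φ j ≤ c * (1 / 64) ^ j + c * (1 / 64) ^ (P - 1 - j) + 2 * c * (1 / P) := by
    intro j hj
    have hjP := Finset.mem_range.1 hj
    have h₁ : 0 ≤ c * (1 / 64) ^ j := by positivity
    have h₂ : 0 ≤ c * (1 / 64) ^ (P - 1 - j) := by positivity
    have h₃ : 0 ≤ 2 * c * (1 / P) := by positivity
    by_cases hleft : j ≤ K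
    · linarith [hφ j hleft hjP]
    by_cases hright : P - 1 - j ≤ K
    · linarith [hφ _ hright (by lia), hsymm j hjP]
    have := hmid K j (by lia) (by lia)
    have := hφ K le_rfl (by lia)
    have : c * (1 / 64) ^ K ≤ c * (1 / P) := by gcongr
    linarith
  calc ∑ j ∈ Finset.range P, φ j
      ≤ c * ∑ j ∈ Finset.range P, (1 / 64) ^ j
          + c * ∑ j ∈ Finset.range P, (1 / 64) ^ (P - 1 - j) + P * (2 * c * (1 / P)) := by
        refine (Finset.sum_le_sum hterm).trans_eq ?_
        simp only [Finset.mul_sum, Finset.sum_add_distrib, Finset.sum_const, Finset.card_range,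
          nsmul_eq_mul]
    _ ≤ c * 2 + c * 2 + P * (2 * c * (1 / P)) := by
        rw [Finset.sum_range_reflect (fun j ↦ (1 / 64 : ℝ) ^ j) P]
        gcongr <;> exact sum_geometric_le P
    _ = 6 * c := by
        field_simp
        ring

lemma cube_mul_pow_div_le {P k : ℕ} (hk : 64 ^ k ≤ 64 * P) {w u : ℝ} (hw : 0 ≤ w) (hu : 0 < u)
    (h : P ^ 3 * w ≤ (u / 1024) ^ 2) :
    12 * (k : ℝ) ^ 3 * w * ((2 * u) ^ k / (2 * u) ^ 2) ≤ 1 / 2 * (u / 256) ^ k := by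
  have hcube : (k : ℝ) ^ 3 ≤ 8 ^ k := by
    calc (k : ℝ) ^ 3 ≤ (2 ^ k) ^ 3 := by gcongr; exact_mod_cast Nat.lt_two_pow_self.le
      _ = 8 ^ k := by rw [pow_right_comm]; norm_num
  have hpow : (4096 : ℝ) ^ k ≤ 4096 * P ^ 3 := by
    have hP : (1 : ℝ) ≤ P := by exact_mod_cast (by have := Nat.one_le_pow k 64; lia : 1 ≤ P)
    have hkR : (64 : ℝ) ^ k ≤ 64 * P := by exact_mod_cast hk
    calc (4096 : ℝ) ^ k = (64 ^ k) ^ 2 := by rw [pow_right_comm]; norm_num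
      _ ≤ (64 * P) ^ 2 := by gcongr
      _ = 4096 * P ^ 2 := by ring
      _ ≤ 4096 * P ^ 3 := by gcongr; norm_num
  have hbase : (8 : ℝ) ^ k * (2 * u) ^ k = 4096 ^ k * (u / 256) ^ k := by
    rw [← mul_pow, ← mul_pow]
    congr 1
    ring
  calc 12 * (k : ℝ) ^ 3 * w * ((2 * u) ^ k / (2 * u) ^ 2)
      ≤ 12 * 8 ^ k * w * ((2 * u) ^ k / (2 * u) ^ 2) := by gcongr
    _ = 3 / u ^ 2 * (4096 ^ k * (u / 256) ^ k) * w := by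
        rw [← hbase]
        generalize (2 * u) ^ k = z
        ring
    _ ≤ 3 / u ^ 2 * (4096 * P ^ 3 * (u / 256) ^ k) * w := by gcongr
    _ = 3 * 4096 / u ^ 2 * (u / 256) ^ k * (P ^ 3 * w) := by ring
    _ ≤ 3 * 4096 / u ^ 2 * (u / 256) ^ k * (u / 1024) ^ 2 := by gcongr
    _ = 3 / 256 * (u / 256) ^ k := by
        field_simp
        norm_num
    _ ≤ 1 / 2 * (u / 256) ^ k := mul_le_mul_of_nonneg_right (by norm_num) (by positivity)

end Recursion

section OperatorNorm

open Matrix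
open scoped Matrix.Norms.L2Operator

variable {m n : Type*} [Fintype m] [Fintype n]

lemma trace_mul_vecMulVec_eq_dotProduct (M : Matrix m n ℝ) (x : m → ℝ) (y : n → ℝ) :
    (M * vecMulVec y x).trace = x ⬝ᵥ (M *ᵥ y) := by
  rw [mul_vecMulVec, trace_vecMulVec, dotProduct_comm]

variable [DecidableEq n]

lemma abs_dotProduct_mulVec_le (M : Matrix m n ℝ) (x : m → ℝ) (y : n → ℝ) :
    |x ⬝ᵥ (M *ᵥ y)| ≤ ‖M‖ * (‖WithLp.toLp 2 x‖ * ‖WithLp.toLp 2 y‖) := by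
  have hinner : x ⬝ᵥ (M *ᵥ y) = inner ℝ (WithLp.toLp 2 (M *ᵥ y)) (WithLp.toLp 2 x) := by
    simp [EuclideanSpace.inner_toLp_toLp]
  calc |x ⬝ᵥ (M *ᵥ y)| ≤ ‖WithLp.toLp 2 (M *ᵥ y)‖ * ‖WithLp.toLp 2 x‖ :=
        hinner ▸ abs_real_inner_le_norm _ _
    _ ≤ ‖M‖ * ‖WithLp.toLp 2 y‖ * ‖WithLp.toLp 2 x‖ := by
        gcongr
        exact l2_opNorm_mulVec M (WithLp.toLp 2 y)
    _ = _ := by ring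

lemma l2_opNorm_le_of_abs_dotProduct_le (M : Matrix m n ℝ) {q : ℝ} (hq : 0 ≤ q)
    (h : ∀ x y, |x ⬝ᵥ (M *ᵥ y)| ≤ q * (‖WithLp.toLp 2 x‖ * ‖WithLp.toLp 2 y‖)) : ‖M‖ ≤ q := by
  rw [l2_opNorm_def]
  refine ContinuousLinearMap.opNorm_le_bound _ hq fun y ↦ ?_
  change ‖WithLp.toLp 2 (M *ᵥ y.ofLp)‖ ≤ q * ‖y‖
  have hsq := (le_abs_self _).trans (h (M *ᵥ y.ofLp) y.ofLp)
  rw [← norm_toLp_sq_eq_dotProduct] at hsq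
  rcases (norm_nonneg (WithLp.toLp 2 (M *ᵥ y.ofLp))).eq_or_lt with hzero | hpos
  · rw [← hzero]
    positivity
  · refine le_of_mul_le_mul_left ?_ hpos
    linarith

lemma trace_transpose_mul_mul_le (E : Matrix n n ℝ) (Y : Matrix n m ℝ) :
    (Yᵀ * E * Y).trace ≤ ‖E‖ * (Yᵀ * Y).trace := by
  have hcol (a : m) : (Yᵀ * E * Y) a a = Y.col a ⬝ᵥ (E *ᵥ Y.col a) := by
    rw [Matrix.mul_assoc]
    rfl
  simp only [trace, diag_apply, hcol, Finset.mul_sum]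
  refine Finset.sum_le_sum fun a _ ↦ (le_abs_self _).trans
    ((abs_dotProduct_mulVec_le _ _ _).trans_eq ?_)
  rw [← sq, norm_toLp_sq_eq_dotProduct]
  rfl

lemma trace_pow_mul_le {X : Matrix n n ℝ} (hX : X.IsSymm) (l : ℕ) (E : Matrix n n ℝ) :
    (X ^ (2 * l) * E).trace ≤ ‖E‖ * (X ^ (2 * l)).trace := by
  have hsymm : (X ^ l)ᵀ = X ^ l := by rw [transpose_pow, hX.eq]
  have h := trace_transpose_mul_mul_le E (X ^ l)
  rwa [trace_mul_cycle, hsymm, ← pow_add, ← two_mul] at h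

end OperatorNorm

section CovarianceMap

open Matrix
open scoped Matrix.Norms.L2Operator

variable {ι n : Type*} [Fintype ι] [Fintype n]

/-- The covariance map `M ↦ 𝔼 XMX = ∑ i, Aᵢ M Aᵢ` of the Gaussian matrix `X = ∑ i, gᵢ • A i`. -/
def covarianceMap (A : ι → Matrix n n ℝ) (M : Matrix n n ℝ) : Matrix n n ℝ :=
  ∑ i, A i * M * A i

lemma traceWord_eq_trace_covarianceMap (A : ι → Matrix n n ℝ) (B M N : Matrix n n ℝ) :
    traceWord A B M N = (covarianceMap A M * N * B).trace := by
  simp only [traceWord, covarianceMap, Finset.sum_mul, trace_sum]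

variable [DecidableEq n] {A : ι → Matrix n n ℝ} {s v : ℝ}

theorem ParametersLE.norm_covarianceMap_le (hA : ParametersLE A s v) (M : Matrix n n ℝ) :
    ‖covarianceMap A M‖ ≤ s * ‖M‖ := by
  have hs := hA.s_nonneg
  refine l2_opNorm_le_of_abs_dotProduct_le _ (by positivity) fun x y ↦ ?_
  have hexpand : x ⬝ᵥ (covarianceMap A M *ᵥ y)
      = ∑ i, ((A i)ᵀ *ᵥ x) ⬝ᵥ (M *ᵥ (A i *ᵥ y)) := by
    simp only [covarianceMap, sum_mulVec, dotProduct_sum, ← mulVec_mulVec, mulVec_transpose,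
      dotProduct_mulVec]
  have hcauchy : ∑ i, ‖WithLp.toLp 2 ((A i)ᵀ *ᵥ x)‖ * ‖WithLp.toLp 2 (A i *ᵥ y)‖
      ≤ s * (‖WithLp.toLp 2 x‖ * ‖WithLp.toLp 2 y‖) := by
    refine (Real.sum_mul_le_sqrt_mul_sqrt _ _ _).trans ?_
    simp only [norm_toLp_sq_eq_dotProduct]
    calc _ ≤ √(s * (x ⬝ᵥ x)) * √(s * (y ⬝ᵥ y)) := by
          gcongr
          · exact hA.sum_transpose_mulVec_le x
          · exact hA.sum_mulVec_le y
      _ = √s * √s * (‖WithLp.toLp 2 x‖ * ‖WithLp.toLp 2 y‖) := by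
          simp only [← norm_toLp_sq_eq_dotProduct, Real.sqrt_mul hs,
            Real.sqrt_sq (norm_nonneg _)]
          ring
      _ = _ := by rw [Real.mul_self_sqrt hs]
  calc |x ⬝ᵥ (covarianceMap A M *ᵥ y)|
      ≤ ∑ i, ‖M‖ * (‖WithLp.toLp 2 ((A i)ᵀ *ᵥ x)‖ * ‖WithLp.toLp 2 (A i *ᵥ y)‖) := by
        rw [hexpand]
        exact (Finset.abs_sum_le_sum_abs _ _).trans
          (Finset.sum_le_sum fun i _ ↦ abs_dotProduct_mulVec_le _ _ _)
    _ ≤ ‖M‖ * (s * (‖WithLp.toLp 2 x‖ * ‖WithLp.toLp 2 y‖)) := by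
        rw [← Finset.mul_sum]
        gcongr
    _ = _ := by ring

end CovarianceMap

section Moments

open MvPolynomial Matrix

variable {ι n : Type*} [Fintype ι]

lemma pencil_neg {m : Type*} (A : ι → Matrix m n ℝ) (g : ι → ℝ) :
    pencil A (-g) = -pencil A g := by
  simp [pencil, Finset.sum_neg_distrib]

lemma isSymm_pencil {A : ι → Matrix n n ℝ} (hA : ∀ i, (A i).IsSymm) (g : ι → ℝ) :
    (pencil A g).IsSymm := by
  simp only [IsSymm, pencil, transpose_sum, transpose_smul, (hA _).eq]

variable [Fintype n] [DecidableEq n]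

lemma eval_pencilPoly_pow_apply (A : ι → Matrix n n ℝ) (g : ι → ℝ) (k : ℕ) (a b : n) :
    eval g ((pencilPoly A ^ k) a b) = (pencil A g ^ k) a b := by
  rw [← map_eval_pencilPoly_pow, map_apply]

lemma eval_trace_pencilPoly_pow_mul (A : ι → Matrix n n ℝ) (B : Matrix n n ℝ) (g : ι → ℝ) (k : ℕ) :
    eval g (pencilPoly A ^ k * B.map C).trace = (pencil A g ^ k * B).trace := by
  simp [trace, Matrix.mul_apply, eval_pencilPoly_pow_apply]

lemma eval_trace_pencilPoly_pow (A : ι → Matrix n n ℝ) (g : ι → ℝ) (k : ℕ) :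
    eval g (pencilPoly A ^ k).trace = (pencil A g ^ k).trace := by
  simp [trace, eval_pencilPoly_pow_apply]

lemma momentMatrix_zero (A : ι → Matrix n n ℝ) : momentMatrix A 0 = 1 := by
  ext a b
  have hone : gaussExp (1 : MvPolynomial ι ℝ) = 1 := by rw [← C_1, gaussExp_C]
  by_cases hab : a = b <;> simp [momentMatrix, Matrix.one_apply, hab, hone]

lemma momentMatrix_of_odd (A : ι → Matrix n n ℝ) {k : ℕ} (hk : Odd k) : momentMatrix A k = 0 := by
  ext a b
  refine gaussExp_eq_zero_of_odd fun g ↦ ?_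
  rw [eval_pencilPoly_pow_apply, eval_pencilPoly_pow_apply, pencil_neg, hk.neg_pow, neg_apply]

lemma trace_momentMatrix_mul (A : ι → Matrix n n ℝ) (B : Matrix n n ℝ) (k : ℕ) :
    (momentMatrix A k * B).trace = gaussExp (pencilPoly A ^ k * B.map C).trace := by
  simp only [trace, diag_apply, Matrix.mul_apply, map_sum, map_apply, momentMatrix]
  refine Finset.sum_congr rfl fun a _ ↦ Finset.sum_congr rfl fun b _ ↦ ?_
  rw [mul_comm _ (C _), gaussExp_C_mul, mul_comm]

lemma trace_momentMatrix (A : ι → Matrix n n ℝ) (k : ℕ) :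
    (momentMatrix A k).trace = gaussExp (pencilPoly A ^ k).trace := by
  simp only [trace, diag_apply, map_sum, map_apply, momentMatrix]

lemma trace_momentMatrix_nonneg {A : ι → Matrix n n ℝ} (hA : ∀ i, (A i).IsSymm) {k : ℕ}
    (hk : Even k) : 0 ≤ (momentMatrix A k).trace := by
  rw [trace_momentMatrix]
  refine gaussExp_nonneg fun g ↦ ?_
  rw [eval_trace_pencilPoly_pow]
  exact trace_pow_nonneg (isSymm_pencil hA g) hk

end Moments

section PowerInterpolation

lemma pow_le_mul_one_add_div_pow {x r : ℝ} (hx : 0 ≤ x) (hr : 0 < r) {m N : ℕ} (h : m ≤ N) :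
    x ^ m ≤ r ^ m * (1 + x ^ N / r ^ N) := by
  have := prod_pow_le_sum_pow ![x, r] (by simp [Fin.forall_fin_succ, hx, hr.le]) ![m, N - m]
  simp only [Fin.prod_univ_two, Fin.sum_univ_two, Matrix.cons_val_zero, Matrix.cons_val_one,
    Nat.add_sub_cancel' h] at this
  calc x ^ m = r ^ m / r ^ N * (x ^ m * r ^ (N - m)) := by
        rw [← pow_mul_pow_sub r h]
        field_simp
    _ ≤ r ^ m / r ^ N * (x ^ N + r ^ N) := by gcongr
    _ = _ := by field_simp; ring

lemma pow_mul_pow_le_mul_one_add_div_pow {x y r : ℝ} (hx : 0 ≤ x) (hy : 0 ≤ y) (hr : 0 < r)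
    {m l N : ℕ} (h : m + l ≤ N) :
    x ^ m * y ^ l ≤ r ^ (m + l) * (1 + x ^ N / r ^ N + y ^ N / r ^ N) := by
  have := prod_pow_le_sum_pow ![x, y, r] (by simp [Fin.forall_fin_succ, hx, hy, hr.le])
    ![m, l, N - (m + l)]
  simp only [Fin.prod_univ_three, Fin.sum_univ_three, Matrix.cons_val, Nat.add_sub_cancel' h]
    at this
  calc x ^ m * y ^ l = r ^ (m + l) / r ^ N * (x ^ m * y ^ l * r ^ (N - (m + l))) := by
        rw [← pow_mul_pow_sub r h]
        field_simp
    _ ≤ r ^ (m + l) / r ^ N * (x ^ N + y ^ N + r ^ N) := by gcongr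
    _ = _ := by field_simp; ring

lemma pow_mul_pow_le_add_of_le {x y : ℝ} (hx : 0 ≤ x) (hy : 0 ≤ y) {k j l : ℕ} (hkj : k ≤ j)
    (hkl : k ≤ l) :
    x ^ j * y ^ l ≤ x ^ k * y ^ (j + l - k) + x ^ (j + l - k) * y ^ k := by
  have := prod_pow_le_sum_pow ![x, y] (by simp [Fin.forall_fin_succ, hx, hy]) ![j - k, l - k]
  simp only [Fin.prod_univ_two, Fin.sum_univ_two, Matrix.cons_val_zero, Matrix.cons_val_one]
    at this
  calc x ^ j * y ^ l = x ^ k * y ^ k * (x ^ (j - k) * y ^ (l - k)) := by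
        rw [mul_mul_mul_comm, pow_mul_pow_sub x hkj, pow_mul_pow_sub y hkl]
    _ ≤ x ^ k * y ^ k * (x ^ (j - k + (l - k)) + y ^ (j - k + (l - k))) := by gcongr
    _ = _ := by
        rw [show j + l - k = k + (j - k + (l - k)) by lia]
        ring

end PowerInterpolation

section MomentDefect

open MvPolynomial Matrix
open scoped Matrix.Norms.L2Operator

variable {ι n : Type*} [Fintype ι] [Fintype n] [DecidableEq n]

/-- The error in the recursion `𝔼 X²ᵏ⁺² ≈ ∑ b ≤ k, η(𝔼 X²ᵇ) 𝔼 X²⁽ᵏ⁻ᵇ⁾`, with `η` the covariance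
map. The recursion is exact for the operator-valued semicircular element of covariance `η`. -/
noncomputable def momentDefect (A : ι → Matrix n n ℝ) (k : ℕ) : Matrix n n ℝ :=
  momentMatrix A (2 * (k + 1)) - ∑ b ∈ Finset.range (k + 1),
    covarianceMap A (momentMatrix A (2 * b)) * momentMatrix A (2 * (k - b))

lemma sum_range_even_eq_of_odd_eq_zero {M : Type*} [AddCommMonoid M] {f : ℕ → M}
    (hf : ∀ b, f (2 * b + 1) = 0) (k : ℕ) :
    ∑ m ∈ Finset.range (2 * k + 1), f m = ∑ b ∈ Finset.range (k + 1), f (2 * b) := by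
  induction k with
  | zero => simp
  | succ k ih =>
    rw [mul_add_one, Finset.sum_range_succ, Finset.sum_range_succ, ih, hf, add_zero,
      Finset.sum_range_succ _ (k + 1), mul_add_one]

lemma trace_momentDefect_mul (A : ι → Matrix n n ℝ) (B : Matrix n n ℝ) (k : ℕ) :
    (momentDefect A k * B).trace = ∑ m ∈ Finset.range (2 * k + 1),
      (gaussExp (traceWord (fun i ↦ (A i).map C) (B.map C)
          (pencilPoly A ^ m) (pencilPoly A ^ (2 * k - m)))
        - traceWord A B (momentMatrix A m) (momentMatrix A (2 * k - m))) := by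
  have hodd (b : ℕ) :
      traceWord A B (momentMatrix A (2 * b + 1)) (momentMatrix A (2 * k - (2 * b + 1))) = 0 := by
    simp [traceWord, momentMatrix_of_odd A (odd_two_mul_add_one b)]
  rw [Finset.sum_sub_distrib, ← gaussExp_trace_pencilPoly_pow_mul, ← trace_momentMatrix_mul,
    sum_range_even_eq_of_odd_eq_zero hodd]
  simp only [traceWord_eq_trace_covarianceMap, momentDefect, Matrix.sub_mul, Finset.sum_mul,
    trace_sub, trace_sum, mul_add_one, Nat.mul_sub]

theorem abs_trace_momentDefect_mul_le (A : ι → Matrix n n ℝ) (B : Matrix n n ℝ) (k : ℕ)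
    {G : MvPolynomial ι ℝ} (hG₀ : 0 ≤ gaussExp G)
    (hG : ∀ g h : ι → ℝ, ∀ a b c e, a + b + c + e + 2 = 2 * k →
      |crossingWord A B (pencil A g) (pencil A h) a b c e| ≤ eval g G + eval h G) :
    |(momentDefect A k * B).trace| ≤ 8 * (k + 1) ^ 3 * gaussExp G := by
  have hterm (m : ℕ) (hm : m ∈ Finset.range (2 * k + 1)) :
      |gaussExp (traceWord (fun i ↦ (A i).map C) (B.map C)
          (pencilPoly A ^ m) (pencilPoly A ^ (2 * k - m)))
        - traceWord A B (momentMatrix A m) (momentMatrix A (2 * k - m))|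
      ≤ 4 * k ^ 2 * gaussExp G := by
    have hmk : m ≤ 2 * k := by simpa [Nat.lt_succ_iff] using hm
    refine (abs_gaussExp_traceWord_sub_le A B m (2 * k - m) G
      fun g h a ha c hc ↦ hG g h _ _ _ _ (by lia)).trans ?_
    refine mul_le_mul_of_nonneg_right ?_ hG₀
    push_cast [hmk]
    linarith [sq_nonneg ((m : ℝ) - k)]
  calc |(momentDefect A k * B).trace|
      ≤ ∑ _m ∈ Finset.range (2 * k + 1), 4 * (k : ℝ) ^ 2 * gaussExp G := by
        rw [trace_momentDefect_mul]
        exact (Finset.abs_sum_le_sum_abs _ _).trans (Finset.sum_le_sum hterm)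
    _ = (2 * k + 1) * (4 * k ^ 2) * gaussExp G := by
        rw [Finset.sum_const, Finset.card_range, nsmul_eq_mul]
        push_cast
        ring
    _ ≤ 8 * (k + 1) ^ 3 * gaussExp G := by
        refine mul_le_mul_of_nonneg_right ?_ hG₀
        have : (0 : ℝ) ≤ k := by positivity
        nlinarith [pow_nonneg this 3, pow_nonneg this 2]

variable {A : ι → Matrix n n ℝ} {s v r : ℝ}

theorem norm_momentMatrix_succ_le (hA : ParametersLE A s v) (k : ℕ) :
    ‖momentMatrix A (2 * (k + 1))‖ ≤ s * ∑ b ∈ Finset.range (k + 1),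
      ‖momentMatrix A (2 * b)‖ * ‖momentMatrix A (2 * (k - b))‖ + ‖momentDefect A k‖ := by
  have hterm (b : ℕ) : ‖covarianceMap A (momentMatrix A (2 * b)) * momentMatrix A (2 * (k - b))‖
      ≤ s * (‖momentMatrix A (2 * b)‖ * ‖momentMatrix A (2 * (k - b))‖) := by
    rw [← mul_assoc]
    refine (norm_mul_le _ _).trans ?_
    gcongr
    exact hA.norm_covarianceMap_le _
  calc ‖momentMatrix A (2 * (k + 1))‖
      ≤ ‖∑ b ∈ Finset.range (k + 1), covarianceMap A (momentMatrix A (2 * b))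
          * momentMatrix A (2 * (k - b))‖ + ‖momentDefect A k‖ := by
        rw [momentDefect]
        exact norm_le_insert' _ _
    _ ≤ _ := by
        rw [Finset.mul_sum]
        gcongr
        exact norm_sum_le_of_le _ fun b _ ↦ hterm b

variable [Nonempty n]

theorem abs_trace_momentDefect_le (hA : ParametersLE A s v) (hsymm : ∀ i, (A i).IsSymm) (k : ℕ) :
    |(momentDefect A (k + 1)).trace|
      ≤ 16 * (k + 2) ^ 3 * (v * s) * (momentMatrix A (2 * k)).trace := by
  have hw : 0 ≤ v * s := mul_nonneg hA.v_nonneg hA.s_nonneg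
  have htrace := trace_momentMatrix_nonneg hsymm (even_two_mul k)
  have hE : gaussExp (C (2 * (v * s)) * (pencilPoly A ^ (2 * k)).trace)
      = 2 * (v * s) * (momentMatrix A (2 * k)).trace := by
    rw [gaussExp_C_mul, trace_momentMatrix]
  have h := abs_trace_momentDefect_mul_le A 1 (k + 1)
    (G := C (2 * (v * s)) * (pencilPoly A ^ (2 * k)).trace)
    (by rw [hE]; positivity) fun g h a b c e habce ↦ by
    have hsum : a + b + c + e = 2 * k := by lia
    refine (abs_crossingWord_one_le hA (isSymm_pencil hsymm g) (isSymm_pencil hsymm h)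
      (hsum ▸ even_two_mul k)).trans_eq ?_
    simp only [hsum, map_mul, eval_C, eval_trace_pencilPoly_pow]
    ring
  rw [Matrix.mul_one, hE] at h
  refine h.trans_eq ?_
  push_cast
  ring

lemma abs_crossingWord_vecMulVec_le_trace (hA : ParametersLE A s v) (hr : 0 < r)
    {X Y : Matrix n n ℝ} (hX : X.IsSymm) (hY : Y.IsSymm) (x y : n → ℝ) {a b c e k P : ℕ}
    (hk : a + b + c + e = 2 * k) (hkP : k ≤ P) :
    |crossingWord A (vecMulVec y x) X Y a b c e|
      ≤ v * s * (‖WithLp.toLp 2 x‖ * ‖WithLp.toLp 2 y‖) * r ^ k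
          * (1 + (X ^ (2 * P)).trace / r ^ P + (Y ^ (2 * P)).trace / r ^ P) := by
  have hw : 0 ≤ v * s := mul_nonneg hA.v_nonneg hA.s_nonneg
  have hsqrt (j : ℕ) : √r ^ (2 * j) = r ^ j := by rw [pow_mul, Real.sq_sqrt hr.le]
  have hsum : c + e + (a + b) = 2 * k := by lia
  have h := pow_mul_pow_le_mul_one_add_div_pow (norm_nonneg X) (norm_nonneg Y)
    (Real.sqrt_pos.2 hr) (m := c + e) (l := a + b) (N := 2 * P) (by lia)
  rw [hsum, hsqrt, hsqrt] at h
  calc _ ≤ v * s * (‖Y‖ ^ (a + b) * ‖X‖ ^ (c + e)) * (‖WithLp.toLp 2 x‖ * ‖WithLp.toLp 2 y‖) :=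
        abs_crossingWord_vecMulVec_le hA X Y x y a b c e
    _ = v * s * (‖WithLp.toLp 2 x‖ * ‖WithLp.toLp 2 y‖) * (‖X‖ ^ (c + e) * ‖Y‖ ^ (a + b)) := by
        ring
    _ ≤ v * s * (‖WithLp.toLp 2 x‖ * ‖WithLp.toLp 2 y‖)
          * (r ^ k * (1 + ‖X‖ ^ (2 * P) / r ^ P + ‖Y‖ ^ (2 * P) / r ^ P)) := by gcongr
    _ ≤ v * s * (‖WithLp.toLp 2 x‖ * ‖WithLp.toLp 2 y‖)
          * (r ^ k * (1 + (X ^ (2 * P)).trace / r ^ P + (Y ^ (2 * P)).trace / r ^ P)) := by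
        gcongr
        · exact norm_pow_le_trace_pow hX (even_two_mul P)
        · exact norm_pow_le_trace_pow hY (even_two_mul P)
    _ = _ := by ring

theorem norm_momentDefect_le (hA : ParametersLE A s v) (hsymm : ∀ i, (A i).IsSymm) (hr : 0 < r)
    {k P : ℕ} (hP : (momentMatrix A (2 * P)).trace ≤ r ^ P) (hkP : k < P) :
    ‖momentDefect A k‖ ≤ 12 * (k + 1) ^ 3 * (v * s) * (r ^ (k + 1) / r ^ 2) := by
  have hw : 0 ≤ v * s := mul_nonneg hA.v_nonneg hA.s_nonneg
  refine l2_opNorm_le_of_abs_dotProduct_le _ (by positivity) fun x y ↦ ?_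
  rw [← trace_mul_vecMulVec_eq_dotProduct]
  set N := ‖WithLp.toLp 2 x‖ * ‖WithLp.toLp 2 y‖
  set β := v * s * N * (r ^ (k + 1) / r ^ 2) with hβ
  set G : MvPolynomial ι ℝ :=
    C (β / 2) + C (β / r ^ P) * (pencilPoly A ^ (2 * P)).trace with hG
  have hE : gaussExp G = β / 2 + β / r ^ P * (momentMatrix A (2 * P)).trace := by
    rw [map_add, gaussExp_C, gaussExp_C_mul, trace_momentMatrix]
  have htrace := trace_momentMatrix_nonneg hsymm (even_two_mul P)
  have hword := abs_trace_momentDefect_mul_le A (vecMulVec y x) k (G := G)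
    (hE ▸ by positivity) fun g h a b c e habce ↦ by
    have hpow : r ^ (k + 1) / r ^ 2 = r ^ (k - 1) := by
      rw [show k + 1 = k - 1 + 2 by lia, pow_add, mul_div_cancel_right₀ _ (by positivity)]
    refine (abs_crossingWord_vecMulVec_le_trace hA hr (isSymm_pencil hsymm g)
      (isSymm_pencil hsymm h) x y (k := k - 1) (P := P) (by lia) (by lia)).trans_eq ?_
    simp only [hG, hβ, hpow, map_add, map_mul, eval_C, eval_trace_pencilPoly_pow]
    ring
  calc _ ≤ 8 * ((k : ℝ) + 1) ^ 3 * (β / 2 + β / r ^ P * (momentMatrix A (2 * P)).trace) :=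
        hE ▸ hword
    _ ≤ 8 * ((k : ℝ) + 1) ^ 3 * (β / 2 + β / r ^ P * r ^ P) := by gcongr
    _ = 12 * (k + 1) ^ 3 * (v * s) * (r ^ (k + 1) / r ^ 2) * N := by
        rw [div_mul_cancel₀ _ (by positivity), hβ]
        ring

end MomentDefect

section MomentPairing

open MvPolynomial Matrix
open scoped Matrix.Norms.L2Operator

variable {ι n : Type*} [Fintype ι] [Fintype n]

lemma traceWord_one_comm [DecidableEq n] (A : ι → Matrix n n ℝ) (P Q : Matrix n n ℝ) :
    traceWord A 1 P Q = traceWord A 1 Q P := by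
  simp only [traceWord, Matrix.mul_one]
  refine Finset.sum_congr rfl fun i _ ↦ ?_
  rw [Matrix.mul_assoc, trace_mul_comm (A i * P), ← Matrix.mul_assoc]

lemma gaussExp_traceWord_rename (A : ι → Matrix n n ℝ) (B : Matrix n n ℝ)
    (P Q : Matrix n n (MvPolynomial ι ℝ)) :
    gaussExp (traceWord (fun i ↦ (A i).map C) (B.map C)
        (P.map (rename (Sum.inl : ι → ι ⊕ ι))) (Q.map (rename Sum.inr)))
      = traceWord A B (P.map gaussExp) (Q.map gaussExp) := by
  simp only [traceWord_eq_sum, traceWordCoeff_map, map_sum, gaussExp_C_mul, map_apply,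
    gaussExp_rename_mul_rename]

lemma eval_traceWord {κ : Type*} (A : ι → Matrix n n ℝ) (B : Matrix n n ℝ)
    (P Q : Matrix n n (MvPolynomial κ ℝ)) (g : κ → ℝ) :
    eval g (traceWord (fun i ↦ (A i).map C) (B.map C) P Q)
      = traceWord A B (P.map (eval g)) (Q.map (eval g)) := by
  simp only [traceWord_eq_sum, traceWordCoeff_map, map_sum, map_mul, eval_C, map_apply]

variable [DecidableEq n]

/-- The summand `tr (η(𝔼 Xᵃ) 𝔼 Xᵇ)` of the trace of the moment recursion. -/
noncomputable def momentPairing (A : ι → Matrix n n ℝ) (a b : ℕ) : ℝ :=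
  traceWord A 1 (momentMatrix A a) (momentMatrix A b)

lemma momentPairing_comm (A : ι → Matrix n n ℝ) (a b : ℕ) :
    momentPairing A a b = momentPairing A b a :=
  traceWord_one_comm A _ _

lemma momentPairing_le {A : ι → Matrix n n ℝ} {s v : ℝ} (hA : ParametersLE A s v)
    (hsymm : ∀ i, (A i).IsSymm) (a l : ℕ) :
    momentPairing A a (2 * l) ≤ s * ‖momentMatrix A a‖ * (momentMatrix A (2 * l)).trace := by
  set E := covarianceMap A (momentMatrix A a)
  have htrace := trace_momentMatrix_nonneg hsymm (even_two_mul l)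
  calc momentPairing A a (2 * l) = gaussExp (pencilPoly A ^ (2 * l) * E.map C).trace := by
        rw [momentPairing, traceWord_eq_trace_covarianceMap, Matrix.mul_one, trace_mul_comm,
          trace_momentMatrix_mul]
    _ ≤ gaussExp (C ‖E‖ * (pencilPoly A ^ (2 * l)).trace) := by
        refine gaussExp_mono fun g ↦ ?_
        rw [eval_trace_pencilPoly_pow_mul, map_mul, eval_C, eval_trace_pencilPoly_pow]
        exact trace_pow_mul_le (isSymm_pencil hsymm g) l E
    _ = ‖E‖ * (momentMatrix A (2 * l)).trace := by rw [gaussExp_C_mul, trace_momentMatrix]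
    _ ≤ _ := by
        gcongr
        exact hA.norm_covarianceMap_le _

lemma trace_mul_conj_diagonal_mul_conj_diagonal {B : Matrix n n ℝ} (hB : B.IsSymm)
    (U V : Matrix n n ℝ) (α β : n → ℝ) :
    (B * (U * diagonal α * Uᵀ) * B * (V * diagonal β * Vᵀ)).trace
      = ∑ x, ∑ y, (Vᵀ * B * U) x y ^ 2 * (α y * β x) := by
  set T := Vᵀ * B * U with hT
  have hTt : Tᵀ = Uᵀ * B * V := by
    simp only [hT, transpose_mul, transpose_transpose, hB.eq, Matrix.mul_assoc]
  calc _ = (T * diagonal α * (Tᵀ * diagonal β)).trace := by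
        rw [← Matrix.mul_assoc, trace_mul_comm _ Vᵀ, hTt]
        simp only [hT, Matrix.mul_assoc]
    _ = _ := by
        simp only [trace, diag_apply, mul_apply (M := T * diagonal α), mul_diagonal,
          transpose_apply]
        congr! 2
        ring

theorem traceWord_pow_pow_le_add {A : ι → Matrix n n ℝ} (hA : ∀ i, (A i).IsSymm)
    {X Y : Matrix n n ℝ} (hX : X.IsSymm) (hY : Y.IsSymm) {k j l : ℕ} (hkj : k ≤ j) (hkl : k ≤ l) :
    traceWord A 1 (X ^ (2 * j)) (Y ^ (2 * l))
      ≤ traceWord A 1 (X ^ (2 * k)) (Y ^ (2 * (j + l - k)))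
        + traceWord A 1 (X ^ (2 * (j + l - k))) (Y ^ (2 * k)) := by
  obtain ⟨U, -, α, hα⟩ := exists_orthogonal_pow_eq hX
  obtain ⟨V, -, β, hβ⟩ := exists_orthogonal_pow_eq hY
  simp only [traceWord, Matrix.mul_one, hα, hβ, trace_mul_conj_diagonal_mul_conj_diagonal (hA _),
    ← Finset.sum_add_distrib, ← mul_add, pow_mul]
  gcongr with i _ x _ y _
  exact pow_mul_pow_le_add_of_le (sq_nonneg _) (sq_nonneg _) hkj hkl

lemma momentPairing_eq_gaussExp (A : ι → Matrix n n ℝ) (a b : ℕ) :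
    momentPairing A a b = gaussExp (traceWord (fun i ↦ (A i).map C) ((1 : Matrix n n ℝ).map C)
      ((pencilPoly A ^ a).map (rename (Sum.inl : ι → ι ⊕ ι)))
      ((pencilPoly A ^ b).map (rename Sum.inr))) :=
  (gaussExp_traceWord_rename A 1 _ _).symm

theorem momentPairing_le_add {A : ι → Matrix n n ℝ} (hA : ∀ i, (A i).IsSymm) {k j l : ℕ}
    (hkj : k ≤ j) (hkl : k ≤ l) :
    momentPairing A (2 * j) (2 * l)
      ≤ momentPairing A (2 * k) (2 * (j + l - k)) + momentPairing A (2 * (j + l - k)) (2 * k) := by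
  have heval (f : ι → ι ⊕ ι) (g : ι ⊕ ι → ℝ) (m : ℕ) :
      ((pencilPoly A ^ m).map (rename f)).map (eval g) = pencil A (g ∘ f) ^ m := by
    rw [← map_eval_pencilPoly_pow]
    ext a b
    simp only [map_apply, eval_rename]
  simp only [momentPairing_eq_gaussExp, ← map_add]
  refine gaussExp_mono fun g ↦ ?_
  simp only [map_add, eval_traceWord, heval]
  exact traceWord_pow_pow_le_add hA (isSymm_pencil hA _) (isSymm_pencil hA _) hkj hkl

lemma sum_momentPairing_eq (A : ι → Matrix n n ℝ) (k : ℕ) :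
    ∑ b ∈ Finset.range (k + 1), momentPairing A (2 * b) (2 * (k - b))
      = (momentMatrix A (2 * (k + 1))).trace - (momentDefect A k).trace := by
  simp only [momentDefect, momentPairing, traceWord_eq_trace_covarianceMap, Matrix.mul_one,
    trace_sub, trace_sum, sub_sub_cancel]

end MomentPairing

section MomentBound

open MvPolynomial Matrix
open scoped Matrix.Norms.L2Operator

variable {ι n : Type*} [Fintype ι] [Fintype n] [DecidableEq n]

lemma trace_pow_le_mul_card_add {X : Matrix n n ℝ} (hX : X.IsSymm) {u : ℝ} (hu : 0 < u) {j P : ℕ}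
    (hj : j ≤ P) :
    (X ^ (2 * j)).trace ≤ u ^ j * (Fintype.card n + (X ^ (2 * P)).trace / u ^ P) := by
  obtain ⟨U, hU, μ, hμ⟩ := exists_orthogonal_pow_eq hX
  simp only [hμ, trace_orthogonal_conj hU, trace_diagonal, pow_mul]
  calc ∑ i, (μ i ^ 2) ^ j ≤ ∑ i, u ^ j * (1 + (μ i ^ 2) ^ P / u ^ P) :=
        Finset.sum_le_sum fun i _ ↦ pow_le_mul_one_add_div_pow (sq_nonneg _) hu hj
    _ = _ := by
        rw [← Finset.mul_sum, Finset.sum_add_distrib, ← Finset.sum_div, Finset.sum_const,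
          Finset.card_univ, nsmul_one]

lemma norm_le_mul_one_add_trace_pow_div [Nonempty n] {X : Matrix n n ℝ} (hX : X.IsSymm) {r : ℝ}
    (hr : 0 < r) {k : ℕ} (hk : Even k) (hk₀ : k ≠ 0) :
    ‖X‖ ≤ r * (1 + (X ^ k).trace / r ^ k) :=
  calc ‖X‖ ≤ r * (1 + ‖X‖ ^ k / r ^ k) := by
        simpa using pow_le_mul_one_add_div_pow (norm_nonneg X) hr (Nat.one_le_iff_ne_zero.2 hk₀)
    _ ≤ r * (1 + (X ^ k).trace / r ^ k) := by
        gcongr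
        exact norm_pow_le_trace_pow hX hk

variable {A : ι → Matrix n n ℝ} {s v u : ℝ}

lemma trace_momentMatrix_le (hsymm : ∀ i, (A i).IsSymm) (hu : 0 < u) {j P : ℕ} (hj : j ≤ P)
    (hP : (momentMatrix A (2 * P)).trace ≤ Fintype.card n * u ^ P) :
    (momentMatrix A (2 * j)).trace ≤ 2 * Fintype.card n * u ^ j := by
  calc (momentMatrix A (2 * j)).trace
      ≤ gaussExp (C (u ^ j * Fintype.card n)
          + C (u ^ j / u ^ P) * (pencilPoly A ^ (2 * P)).trace) := by
        rw [trace_momentMatrix]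
        refine gaussExp_mono fun g ↦ ?_
        simp only [map_add, map_mul, eval_C, eval_trace_pencilPoly_pow]
        refine (trace_pow_le_mul_card_add (isSymm_pencil hsymm g) hu hj).trans_eq ?_
        ring
    _ = u ^ j * Fintype.card n + u ^ j / u ^ P * (momentMatrix A (2 * P)).trace := by
        rw [map_add, gaussExp_C, gaussExp_C_mul, trace_momentMatrix]
    _ ≤ u ^ j * Fintype.card n + u ^ j / u ^ P * (Fintype.card n * u ^ P) := by gcongr
    _ = _ := by
        field_simp
        ring

variable [Nonempty n]

theorem norm_momentMatrix_le (hA : ParametersLE A s v) (hsymm : ∀ i, (A i).IsSymm) (hu : 0 < u)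
    {P K : ℕ} (hP : (momentMatrix A (2 * P)).trace ≤ (2 * u) ^ P) (hsu : s ≤ u / 1024)
    (hvs : P ^ 3 * (v * s) ≤ (u / 1024) ^ 2) (hK : 64 ^ K ≤ 64 * P) {k : ℕ} (hk : k ≤ K) :
    ‖momentMatrix A (2 * k)‖ ≤ (u / 64) ^ k := by
  have hdefect (k : ℕ) (hk : k < K) : ‖momentDefect A k‖ ≤ 1 / 2 * (u / 256) ^ (k + 1) := by
    have hkP : 64 ^ (k + 1) ≤ 64 * P := (Nat.pow_le_pow_right (by simp) hk).trans hK
    have hlt : k < P := (show k < 64 ^ k from Nat.lt_pow_self (by simp)).trans_le (by lia)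
    refine (norm_momentDefect_le hA hsymm (by positivity) hP hlt).trans ?_
    exact_mod_cast cube_mul_pow_div_le hkP (mul_nonneg hA.v_nonneg hA.s_nonneg) hu hvs
  calc ‖momentMatrix A (2 * k)‖ ≤ catalan k * (u / 256) ^ k :=
        le_catalan_mul_pow (q := fun k ↦ ‖momentMatrix A (2 * k)‖) hA.s_nonneg (by linarith)
          (by positivity) (fun _ ↦ norm_nonneg _) (by simp [momentMatrix_zero]) hdefect
          (fun k _ ↦ norm_momentMatrix_succ_le hA k) k hk
    _ ≤ 4 ^ k * (u / 256) ^ k := by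
        gcongr
        exact_mod_cast catalan_le_four_pow k
    _ = (u / 64) ^ k := by
        rw [← mul_pow]
        ring

/-- Only logarithmically many terms of the sum need a bound in operator norm: by symmetry and
`momentPairing_le_add` the middle terms are at most twice the last term so bounded. -/
theorem sum_momentPairing_le (hA : ParametersLE A s v) (hsymm : ∀ i, (A i).IsSymm) (hu : 0 < u)
    {P : ℕ} (hP₀ : P ≠ 0) (hcard : (Fintype.card n : ℝ) ≤ 2 ^ P)
    (hP : (momentMatrix A (2 * P)).trace = Fintype.card n * u ^ P) (hsu : s ≤ u / 1024)
    (hvs : P ^ 3 * (v * s) ≤ (u / 1024) ^ 2) :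
    ∑ j ∈ Finset.range P, momentPairing A (2 * j) (2 * (P - 1 - j))
      ≤ 12 / 1024 * (Fintype.card n * u ^ P) := by
  set K := Nat.log 64 P + 1
  have hK : 64 ^ K ≤ 64 * P := by
    rw [pow_succ, mul_comm]
    exact Nat.mul_le_mul_left _ (Nat.pow_log_le_self 64 hP₀)
  have htrace : (momentMatrix A (2 * P)).trace ≤ (2 * u) ^ P := by
    rw [hP, mul_pow]
    gcongr
  have hterm (j : ℕ) (hjK : j ≤ K) (hjP : j < P) : momentPairing A (2 * j) (2 * (P - 1 - j))
      ≤ 2 / 1024 * (Fintype.card n * u ^ P) * (1 / 64) ^ j := by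
    have hnorm := norm_momentMatrix_le hA hsymm hu htrace hsu hvs hK hjK
    have hrest := trace_momentMatrix_le hsymm hu (show P - 1 - j ≤ P by lia) hP.le
    have hrest₀ := trace_momentMatrix_nonneg hsymm (even_two_mul (P - 1 - j))
    calc momentPairing A (2 * j) (2 * (P - 1 - j))
        ≤ s * ‖momentMatrix A (2 * j)‖ * (momentMatrix A (2 * (P - 1 - j))).trace :=
          momentPairing_le hA hsymm _ _
      _ ≤ u / 1024 * (u / 64) ^ j * (2 * Fintype.card n * u ^ (P - 1 - j)) := by gcongr
      _ = 2 / 1024 * (Fintype.card n * u ^ (1 + j + (P - 1 - j))) * (1 / 64) ^ j := by ring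
      _ = _ := by rw [show 1 + j + (P - 1 - j) = P by lia]
  have hsum := sum_range_le_of_symm (Nat.pos_of_ne_zero hP₀)
    (Nat.lt_pow_succ_log_self (by simp) P).le (by positivity) hterm
    (fun j hj ↦ by rw [momentPairing_comm, Nat.sub_sub_self (by lia)])
    fun k j hkj hjk ↦ by
      have h := momentPairing_le_add hsymm hkj (show k ≤ P - 1 - j by lia)
      rwa [momentPairing_comm A (2 * (_ - k)), ← two_mul, Nat.add_sub_cancel' (by lia)] at h
  linarith

theorem div_lt_of_trace_momentMatrix_eq (hA : ParametersLE A s v) (hsymm : ∀ i, (A i).IsSymm)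
    (hu : 0 < u) {P : ℕ} (hP₂ : 2 ≤ P) (hcard : (Fintype.card n : ℝ) ≤ 2 ^ P)
    (hP : (momentMatrix A (2 * P)).trace = Fintype.card n * u ^ P)
    (hvs : P ^ 3 * (v * s) ≤ (u / 1024) ^ 2) : u / 1024 < s := by
  by_contra! hsu
  have hsum := sum_momentPairing_le hA hsymm hu (by lia) hcard hP hsu hvs
  obtain ⟨m, rfl⟩ := Nat.exists_eq_add_of_le' hP₂
  have hdefect : |(momentDefect A (m + 1)).trace|
      ≤ 32 / 1024 ^ 2 * (Fintype.card n * u ^ (m + 2)) := by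
    have hm := trace_momentMatrix_le hsymm hu (show m ≤ m + 2 by lia) hP.le
    have hm₀ := trace_momentMatrix_nonneg hsymm (even_two_mul m)
    push_cast at hvs
    calc _ ≤ 16 * (((m : ℝ) + 2) ^ 3 * (v * s)) * (momentMatrix A (2 * m)).trace := by
          rw [← mul_assoc]
          exact abs_trace_momentDefect_le hA hsymm m
      _ ≤ 16 * (u / 1024) ^ 2 * (2 * Fintype.card n * u ^ m) := by gcongr
      _ = _ := by ring
  have hpos : 0 < Fintype.card n * u ^ (m + 2) := by positivity
  have hrec := sum_momentPairing_eq A (m + 1)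
  rw [show m + 1 + 1 = m + 2 from rfl, hP] at hrec
  have := le_abs_self (momentDefect A (m + 1)).trace
  simp only [show m + 2 - 1 = m + 1 from rfl] at hsum
  linarith

theorem trace_momentMatrix_le_pow (hA : ParametersLE A s v) (hsymm : ∀ i, (A i).IsSymm) {P : ℕ}
    (hP₂ : 2 ≤ P) (hcard : (Fintype.card n : ℝ) ≤ 2 ^ P) {D : ℝ} (hsD : s ≤ D)
    (hvs : P ^ 3 * (v * s) ≤ D ^ 2) : (momentMatrix A (2 * P)).trace ≤ (2048 * D) ^ P := by
  have hD : 0 ≤ D := hA.s_nonneg.trans hsD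
  rcases (trace_momentMatrix_nonneg hsymm (even_two_mul P)).eq_or_lt with h₀ | h₀
  · rw [← h₀]
    positivity
  set t := (momentMatrix A (2 * P)).trace
  set u : ℝ := (t / Fintype.card n) ^ (P : ℝ)⁻¹ with hu_def
  have hu : 0 < u := by positivity
  have ht : t = Fintype.card n * u ^ P := by
    rw [hu_def, Real.rpow_inv_natCast_pow (by positivity) (by lia)]
    field_simp
  have huD : u ≤ 1024 * D := by
    by_contra! h
    have hDu : D ≤ u / 1024 := by linarith
    exact (div_lt_of_trace_momentMatrix_eq hA hsymm hu hP₂ hcard ht (hvs.trans (by gcongr))).not_ge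
      (hsD.trans hDu)
  calc t = Fintype.card n * u ^ P := ht
    _ ≤ 2 ^ P * (1024 * D) ^ P := by gcongr
    _ = (2048 * D) ^ P := by
        rw [← mul_pow]
        ring

theorem integral_norm_pencil_le (hA : ParametersLE A s v) (hsymm : ∀ i, (A i).IsSymm) {P : ℕ}
    (hP₂ : 2 ≤ P) (hcard : (Fintype.card n : ℝ) ≤ 2 ^ P) {D : ℝ} (hD : 0 < D) (hsD : s ≤ D)
    (hvs : P ^ 3 * (v * s) ≤ D ^ 2) :
    ∫ g, ‖pencil A g‖ ∂(Measure.pi fun _ : ι ↦ gaussianReal 0 1) ≤ 2 * √(2048 * D) := by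
  set r := √(2048 * D)
  have hr : 0 < r := by positivity
  have hmoment : (momentMatrix A (2 * P)).trace ≤ r ^ (2 * P) := by
    rw [pow_mul, Real.sq_sqrt (by positivity)]
    exact trace_momentMatrix_le_pow hA hsymm hP₂ hcard hsD hvs
  set p : MvPolynomial ι ℝ := C r + C (r / r ^ (2 * P)) * (pencilPoly A ^ (2 * P)).trace with hp
  calc _ ≤ ∫ g, eval g p ∂(Measure.pi fun _ : ι ↦ gaussianReal 0 1) := by
        refine integral_mono_of_nonneg (ae_of_all _ fun _ ↦ norm_nonneg _)
          (integrable_eval_gaussian p) (ae_of_all _ fun g ↦ ?_)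
        simp only [hp, map_add, map_mul, eval_C, eval_trace_pencilPoly_pow]
        refine (norm_le_mul_one_add_trace_pow_div (isSymm_pencil hsymm g) hr (even_two_mul P)
          (by lia)).trans_eq ?_
        ring
    _ = r + r / r ^ (2 * P) * (momentMatrix A (2 * P)).trace := by
        rw [← gaussExp_apply, hp, map_add, gaussExp_C, gaussExp_C_mul, trace_momentMatrix]
    _ ≤ r + r / r ^ (2 * P) * r ^ (2 * P) := by gcongr
    _ = 2 * r := by
        field_simp
        norm_num

end MomentBound

section SpectralTruncation

open Matrix

variable {ι : Type*} [Fintype ι] {G : Matrix ι ι ℝ}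

lemma dotProduct_mulVec_eq_sum_eigenvalues [DecidableEq ι] (hG : G.IsHermitian)
    (y : EuclideanSpace ℝ ι) :
    y.ofLp ⬝ᵥ (G *ᵥ y.ofLp)
      = ∑ k, hG.eigenvalues k * inner ℝ (hG.eigenvectorBasis k) y ^ 2 := by
  have heig (k : ι) : toEuclideanLin G (hG.eigenvectorBasis k)
      = hG.eigenvalues k • hG.eigenvectorBasis k := by
    ext i
    simpa using congrFun (hG.mulVec_eigenvectorBasis k) i
  have hinner : y.ofLp ⬝ᵥ (G *ᵥ y.ofLp) = inner ℝ y (toEuclideanLin G y) := by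
    simp [EuclideanSpace.inner_eq_star_dotProduct, dotProduct_comm]
  rw [hinner, ← hG.eigenvectorBasis.sum_inner_mul_inner]
  refine Finset.sum_congr rfl fun k _ ↦ ?_
  rw [← isSymmetric_toEuclideanLin_iff.2 hG, heig, real_inner_smul_left, real_inner_comm]
  ring

lemma card_lt_eigenvalues_le_trace_div [DecidableEq ι] (hG : G.PosSemidef) {t : ℝ} (ht : 0 < t) :
    (Finset.card {k | t < hG.isHermitian.eigenvalues k} : ℝ) ≤ G.trace / t := by
  rw [le_div_iff₀ ht, hG.isHermitian.trace_eq_sum_eigenvalues, ← nsmul_eq_mul]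
  refine (Finset.card_nsmul_le_sum _ hG.isHermitian.eigenvalues t fun k hk ↦
    (Finset.mem_filter.1 hk).2.le).trans ?_
  exact Finset.sum_le_sum_of_subset_of_nonneg (Finset.subset_univ _)
    fun k _ _ ↦ hG.eigenvalues_nonneg k

theorem exists_submodule_dotProduct_mulVec_le (hG : G.PosSemidef) {t : ℝ} (ht : 0 < t) :
    ∃ H : Submodule ℝ (EuclideanSpace ℝ ι),
      Fintype.card ι - G.trace / t ≤ Module.finrank ℝ H ∧
      ∀ y ∈ H, y.ofLp ⬝ᵥ (G *ᵥ y.ofLp) ≤ t * ‖y‖ ^ 2 := by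
  classical
  set e := hG.isHermitian.eigenvectorBasis with he
  set S : Finset ι := {k | t < hG.isHermitian.eigenvalues k}
  set L := Submodule.span ℝ (S.image e : Set (EuclideanSpace ℝ ι))
  refine ⟨Lᗮ, ?_, fun y hy ↦ ?_⟩
  · have hL : Module.finrank ℝ L ≤ S.card :=
      (finrank_span_finset_le_card _).trans Finset.card_image_le
    have hadd := L.finrank_add_finrank_orthogonal
    rw [finrank_euclideanSpace] at hadd
    rify at hL hadd
    linarith [card_lt_eigenvalues_le_trace_div hG ht]
  · rw [dotProduct_mulVec_eq_sum_eigenvalues hG.isHermitian, ← e.sum_sq_inner_right, Finset.mul_sum]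
    refine Finset.sum_le_sum fun k _ ↦ ?_
    rcases lt_or_ge t (hG.isHermitian.eigenvalues k) with hk | hk
    · have hort : inner ℝ (e k) y = 0 := Submodule.inner_right_of_mem_orthogonal
        (Submodule.subset_span (Finset.mem_coe.2 (Finset.mem_image_of_mem e (by simpa [S])))) hy
      simp [← he, hort]
    · gcongr

/-- The matrix whose rows are the vectorizations of the `A i`. Its Gram matrix `W * Wᵀ` has the same
nonzero eigenvalues as `Cov X = Wᵀ * W`, where `X = ∑ i, gᵢ • A i`. -/
def vecRows {m n : Type*} (A : ι → Matrix m n ℝ) : Matrix ι (m × n) ℝ :=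
  of fun i p ↦ A i p.1 p.2

variable {m n : Type*} [Fintype m] [Fintype n]

lemma trace_vecRows_mul_transpose (A : ι → Matrix m n ℝ) :
    (vecRows A * (vecRows A)ᵀ).trace = ∑ i, frobNormSq (A i) := by
  simp only [trace, diag_apply, mul_apply, transpose_apply, vecRows, of_apply, frobNormSq,
    Fintype.sum_prod_type, pow_two]

lemma dotProduct_vecRows_mul_transpose_mulVec (A : ι → Matrix m n ℝ) (c : ι → ℝ) :
    c ⬝ᵥ ((vecRows A * (vecRows A)ᵀ) *ᵥ c) = frobNormSq (pencil A c) := by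
  rw [← mulVec_mulVec, dotProduct_mulVec, mulVec_transpose]
  simp only [dotProduct, vecMul, vecRows, of_apply, frobNormSq, pencil, Matrix.sum_apply,
    Matrix.smul_apply, smul_eq_mul, Fintype.sum_prod_type, pow_two]

theorem exists_submodule_frobNormSq_pencil_le (A : ι → Matrix m n ℝ) {t : ℝ} (ht : 0 < t) :
    ∃ H : Submodule ℝ (EuclideanSpace ℝ ι),
      Fintype.card ι - (∑ i, frobNormSq (A i)) / t ≤ Module.finrank ℝ H ∧
      ∀ y ∈ H, frobNormSq (pencil A y) ≤ t * ‖y‖ ^ 2 := by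
  have hG : (vecRows A * (vecRows A)ᵀ).PosSemidef := posSemidef_self_mul_conjTranspose _
  simpa only [trace_vecRows_mul_transpose, dotProduct_vecRows_mul_transpose_mulVec]
    using exists_submodule_dotProduct_mulVec_le hG ht

end SpectralTruncation

section Restriction

open Matrix
open scoped Matrix.Norms.L2Operator

variable {ι κ m n : Type*} [Fintype ι] [Fintype κ]

lemma pencil_mulVec [Fintype n] (A : ι → Matrix m n ℝ) (c : ι → ℝ) (x : n → ℝ) (a : m) :
    (pencil A c *ᵥ x) a = ∑ i, c i * (A i *ᵥ x) a := by
  simp only [pencil, sum_mulVec, smul_mulVec, Finset.sum_apply, Pi.smul_apply, smul_eq_mul]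

lemma pencil_pencil (A : ι → Matrix m n ℝ) (v : κ → EuclideanSpace ℝ ι) (c : κ → ℝ) :
    pencil (fun j ↦ pencil A (v j)) c = pencil A (∑ j, c j • v j : EuclideanSpace ℝ ι) := by
  simp only [pencil, Finset.smul_sum, WithLp.ofLp_sum, WithLp.ofLp_smul, Finset.sum_apply,
    Pi.smul_apply, Finset.sum_smul, smul_smul, smul_eq_mul]
  exact Finset.sum_comm

variable [Fintype m] [Fintype n] {v : κ → EuclideanSpace ℝ ι}

lemma sum_pencil_mulVec_le_of_orthonormal (hv : Orthonormal ℝ v) (A : ι → Matrix m n ℝ)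
    (x : n → ℝ) :
    ∑ j, (pencil A (v j) *ᵥ x) ⬝ᵥ (pencil A (v j) *ᵥ x) ≤ ∑ i, (A i *ᵥ x) ⬝ᵥ (A i *ᵥ x) := by
  simp only [dotProduct, ← pow_two]
  rw [Finset.sum_comm, Finset.sum_comm (s := (Finset.univ : Finset ι))]
  refine Finset.sum_le_sum fun a _ ↦ ?_
  have hbessel := hv.sum_inner_products_le (WithLp.toLp 2 fun i ↦ (A i *ᵥ x) a)
    (s := Finset.univ)
  simpa [EuclideanSpace.real_norm_sq_eq, PiLp.inner_apply, pencil_mulVec, mul_comm] using hbessel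

lemma sum_mulVec_le_norm_mul [DecidableEq n] (A : ι → Matrix m n ℝ) (x : n → ℝ) :
    ∑ i, (A i *ᵥ x) ⬝ᵥ (A i *ᵥ x) ≤ ‖∑ i, (A i)ᵀ * A i‖ * (x ⬝ᵥ x) := by
  have hexpand : ∑ i, (A i *ᵥ x) ⬝ᵥ (A i *ᵥ x) = x ⬝ᵥ ((∑ i, (A i)ᵀ * A i) *ᵥ x) := by
    simp only [sum_mulVec, dotProduct_sum, ← mulVec_mulVec, mulVec_transpose, dotProduct_mulVec]
    simp only [dotProduct_comm]
  rw [hexpand, ← norm_toLp_sq_eq_dotProduct, pow_two]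
  exact (le_abs_self _).trans (abs_dotProduct_mulVec_le _ x x)

theorem parametersLE_of_orthonormal [DecidableEq n] {A : ι → Matrix n n ℝ}
    (hsymm : ∀ i, (A i).IsSymm) (hv : Orthonormal ℝ v) {s t : ℝ}
    (hs : ‖∑ i, A i * A i‖ ≤ s) (ht : 0 ≤ t)
    (hfrob : ∀ c : κ → ℝ, frobNormSq (pencil A (∑ j, c j • v j : EuclideanSpace ℝ ι))
      ≤ t * ‖∑ j, c j • v j‖ ^ 2) :
    ParametersLE (fun j ↦ pencil A (v j)) s t := by
  have hsum (x : n → ℝ) : ∑ j, (pencil A (v j) *ᵥ x) ⬝ᵥ (pencil A (v j) *ᵥ x)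
      ≤ s * (x ⬝ᵥ x) := by
    refine (sum_pencil_mulVec_le_of_orthonormal hv A x).trans ?_
    refine (sum_mulVec_le_norm_mul A x).trans ?_
    simp only [(hsymm _).eq, ← norm_toLp_sq_eq_dotProduct]
    gcongr
  refine ⟨(norm_nonneg _).trans hs, ht, hsum, fun x ↦ ?_, fun c ↦ ?_⟩
  · simpa only [(isSymm_pencil hsymm _).eq] using hsum x
  · have hnorm : ‖∑ j, c j • v j‖ ^ 2 = ∑ j, c j ^ 2 := by
      rw [← real_inner_self_eq_norm_sq, hv.inner_sum]
      simp [pow_two]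
    rw [pencil_pencil, ← hnorm]
    exact hfrob c

end Restriction

section GaussianNorm

open scoped Matrix.Norms.L2Operator

lemma exists_le_two_pow_and_le_log {d : ℕ} (hd : 2 ≤ d) :
    ∃ P : ℕ, 2 ≤ P ∧ d ≤ 2 ^ P ∧ (P : ℝ) ≤ 5 * Real.log d := by
  have hlog₂ : Real.log 2 ≤ Real.log d := Real.log_le_log (by norm_num) (by exact_mod_cast hd)
  have hlog : Nat.log 2 d * Real.log 2 ≤ Real.log d := by
    rw [← Real.log_pow]
    exact Real.log_le_log (by positivity) (by exact_mod_cast Nat.pow_log_le_self 2 (by lia))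
  refine ⟨Nat.log 2 d + 1, ?_, (Nat.lt_pow_succ_log_self one_lt_two d).le, ?_⟩
  · exact Nat.succ_le_succ (Nat.log_pos one_lt_two hd)
  · push_cast
    nlinarith [Real.log_two_gt_d9]

lemma rpow_three_quarters_le {p L : ℝ} (hp : 0 ≤ p) (hpL : p ≤ 5 * L) :
    p ^ (3 / 4 : ℝ) ≤ 5 * L ^ (3 / 4 : ℝ) := by
  calc p ^ (3 / 4 : ℝ) ≤ (5 * L) ^ (3 / 4 : ℝ) := by gcongr
    _ = 5 ^ (3 / 4 : ℝ) * L ^ (3 / 4 : ℝ) := Real.mul_rpow (by norm_num) (by linarith)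
    _ ≤ 5 * L ^ (3 / 4 : ℝ) := by
        have : 0 ≤ L := by linarith
        gcongr
        exact Real.rpow_le_self_of_one_le (by norm_num) (by norm_num)

lemma sqrt_mul_sq_add_le {a b : ℝ} (ha : 0 ≤ a) (hb : 0 ≤ b) :
    √(2048 * (a ^ 2 + b ^ 2)) ≤ 46 * (a + b) := by
  refine Real.sqrt_le_iff.2 ⟨by positivity, ?_⟩
  nlinarith [mul_nonneg ha hb, sq_nonneg a, sq_nonneg b]

theorem integral_norm_pencil_le_log {ι n : Type*} [Fintype ι] [Fintype n] [DecidableEq n]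
    {A : ι → Matrix n n ℝ} {σ v : ℝ} (hσ : 0 < σ) (hv : 0 ≤ v)
    (hA : ParametersLE A (σ ^ 2) (v ^ 2)) (hsymm : ∀ i, (A i).IsSymm)
    (hn : 2 ≤ Fintype.card n) :
    ∫ g, ‖pencil A g‖ ∂(Measure.pi fun _ : ι ↦ gaussianReal 0 1)
      ≤ 460 * (σ + Real.log (Fintype.card n) ^ (3 / 4 : ℝ) * √σ * √v) := by
  have : Nonempty n := Fintype.card_pos_iff.1 (by lia)
  obtain ⟨P, hP₂, hcard, hPlog⟩ := exists_le_two_pow_and_le_log hn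
  set q : ℝ := (P : ℝ) ^ (3 / 4 : ℝ) with hq
  have hq₄ : (P : ℝ) ^ 3 = q ^ 4 := by
    rw [hq, ← Real.rpow_mul_natCast P.cast_nonneg, ← Real.rpow_natCast]
    norm_num
  set b := q * √σ * √v with hb_def
  have hb : b ^ 2 = q ^ 2 * σ * v := by
    rw [hb_def, mul_pow, mul_pow, Real.sq_sqrt hσ.le, Real.sq_sqrt hv]
  have hD : P ^ 3 * (v ^ 2 * σ ^ 2) ≤ (σ ^ 2 + b ^ 2) ^ 2 :=
    calc P ^ 3 * (v ^ 2 * σ ^ 2) = (b ^ 2) ^ 2 := by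
          rw [hq₄, hb]
          ring
      _ ≤ (σ ^ 2 + b ^ 2) ^ 2 := by
          gcongr
          exact le_add_of_nonneg_left (sq_nonneg σ)
  calc _ ≤ 2 * √(2048 * (σ ^ 2 + b ^ 2)) :=
        integral_norm_pencil_le hA hsymm hP₂ (by exact_mod_cast hcard) (by positivity)
          (le_add_of_nonneg_right (sq_nonneg b)) hD
    _ ≤ 2 * (46 * (σ + b)) := by
        gcongr
        exact sqrt_mul_sq_add_le hσ.le (by positivity)
    _ ≤ 2 * (46 * (σ + 5 * Real.log (Fintype.card n) ^ (3 / 4 : ℝ) * √σ * √v)) := by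
        rw [hb_def]
        gcongr
        exact rpow_three_quarters_le P.cast_nonneg hPlog
    _ ≤ _ := by linarith

end GaussianNorm

/-- **Projection step in the proof of Lemma 3.1.** There is a universal constant `C > 0`
such that for all positive integers `n`, `d ≥ 2`, reals `σ, f > 0` and `δ ∈ (0,1)`, and
symmetric matrices `A 1, …, A n ∈ ℝ^{d×d}` with `‖∑ A i ²‖_op ≤ σ²` and
`∑ ‖A i‖_F² ≤ n f²`, there is a subspace `H ⊆ ℝⁿ` of dimension at least `(1-δ)n` such
that for the standard Gaussian vector `y = ∑ j, h j • b j` on `H` (with `b` any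
orthonormal basis of `H` and `h` i.i.d. standard Gaussians),
`𝔼[‖∑ i, y i • A i‖_op] ≤ C (σ + (log d)^{3/4} σ^{1/2} (f/δ^{1/2})^{1/2})`. -/
theorem projection_step :
    ∃ C : ℝ, 0 < C ∧ ∀ (n d : ℕ), 0 < n → 2 ≤ d →
      ∀ (σ f δ : ℝ), 0 < σ → 0 < f → δ ∈ Set.Ioo (0 : ℝ) 1 →
      ∀ A : Fin n → Matrix (Fin d) (Fin d) ℝ,
        (∀ i, (A i).IsSymm) →
        opNorm (∑ i, A i * A i) ≤ σ ^ 2 →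
        (∑ i, frobNormSq (A i)) ≤ (n : ℝ) * f ^ 2 →
        ∃ H : Submodule ℝ (EuclideanSpace ℝ (Fin n)),
          (1 - δ) * n ≤ (Module.finrank ℝ H : ℝ) ∧
          ∀ b : OrthonormalBasis (Fin (Module.finrank ℝ H)) ℝ H,
            (∫ h, opNorm (∑ i,
                ((∑ j, h j • ((b j : H) : EuclideanSpace ℝ (Fin n))) i) • A i)
              ∂(Measure.pi fun _ : Fin (Module.finrank ℝ H) => gaussianReal 0 1)) ≤
            C * (σ + (Real.log d) ^ ((3 : ℝ) / 4) * Real.sqrt σ *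
              Real.sqrt (f / Real.sqrt δ)) := by
  refine ⟨460, by norm_num, fun n d _ hd σ f δ hσ hf ⟨hδ, _⟩ A hsymm hop hfrob ↦ ?_⟩
  have ht : 0 < (f / √δ) ^ 2 := by positivity
  obtain ⟨H, hdim, hH⟩ := exists_submodule_frobNormSq_pencil_le A ht
  refine ⟨H, ?_, fun b ↦ ?_⟩
  · have hlost : (∑ i, frobNormSq (A i)) / (f / √δ) ^ 2 ≤ n * δ := by
      rw [div_le_iff₀ ht, div_pow, Real.sq_sqrt hδ.le]
      exact hfrob.trans_eq (by field_simp)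
    rw [Fintype.card_fin] at hdim
    linarith
  · have hb : Orthonormal ℝ fun j ↦ (b j : EuclideanSpace ℝ (Fin n)) :=
      b.orthonormal.comp_linearIsometry H.subtypeₗᵢ
    have hB := parametersLE_of_orthonormal hsymm hb hop ht.le fun c ↦
      hH _ (H.sum_mem fun j _ ↦ H.smul_mem _ (b j).2)
    have h := integral_norm_pencil_le_log hσ (by positivity) hB
      (fun j ↦ isSymm_pencil hsymm _) (by simpa using hd)
    simp only [pencil_pencil, Fintype.card_fin] at h
    exact h
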